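/- (Simplicity and positivity of the ground state) Let V ∈ S_p with 1 < p < ∞ and let λ₁ = inf{ a(u,u) : u ∈ H₀(Ω), ‖u‖_{L²(Ω)} = 1 } be the first eigenvalue. Then λ₁ is simple: the eigenspace {u ∈ H₀(Ω) : a(u,v) = λ₁ ∫_Ω u v dxdy for all v ∈ H₀(Ω)} is one-dimensional, and every nonzero element of it is either positive a.e. on Ω or negative a.e. on Ω; in particular the first eigenfunction can be chosen positive a.e. on Ω. -/

import Mathlib

open MeasureTheory Set Filter

noncomputable section

/-- The open unit square `Ω = (0,1) × (0,1)` in `ℝ²`. -/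
def Omega : Set (ℝ × ℝ) := Ioo (0:ℝ) 1 ×ˢ Ioo (0:ℝ) 1

/-- Test functions on a set `s`: smooth with compact support contained in `s`. -/
def IsTestOn (s : Set (ℝ × ℝ)) (φ : ℝ × ℝ → ℝ) : Prop :=
  ContDiff ℝ (⊤ : ℕ∞) φ ∧ HasCompactSupport φ ∧ tsupport φ ⊆ s

/-- Classical partial derivative in the `x`-direction. -/
def pdx (φ : ℝ × ℝ → ℝ) (p : ℝ × ℝ) : ℝ := fderiv ℝ φ p (1, 0)

/-- Classical partial derivative in the `y`-direction. -/
def pdy (φ : ℝ × ℝ → ℝ) (p : ℝ × ℝ) : ℝ := fderiv ℝ φ p (0, 1)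

/-- `g` is a weak `x`-partial derivative of `u` on `s`. -/
def HasWeakDerivXOn (s : Set (ℝ × ℝ)) (u g : ℝ × ℝ → ℝ) : Prop :=
  LocallyIntegrableOn u s volume ∧ LocallyIntegrableOn g s volume ∧
  ∀ φ : ℝ × ℝ → ℝ, IsTestOn s φ →
    ∫ p in s, u p * pdx φ p = - ∫ p in s, g p * φ p

/-- `g` is a weak `y`-partial derivative of `u` on `s`. -/
def HasWeakDerivYOn (s : Set (ℝ × ℝ)) (u g : ℝ × ℝ → ℝ) : Prop :=
  LocallyIntegrableOn u s volume ∧ LocallyIntegrableOn g s volume ∧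
  ∀ φ : ℝ × ℝ → ℝ, IsTestOn s φ →
    ∫ p in s, u p * pdy φ p = - ∫ p in s, g p * φ p

/-- Test functions on `Ω`. -/
def IsTest (φ : ℝ × ℝ → ℝ) : Prop := IsTestOn Omega φ

/-- Membership in the weighted Sobolev space `𝓗¹(Ω)`, with weak derivatives `gx, gy`:
`u ∈ L²(Ω)`, `gx = ∂ₓu`, `gy = ∂_y u` weakly, and `y^α₁ gx, x^α₂ gy ∈ L²(Ω)`. -/
structure MemH1 (α₁ α₂ : ℝ) (u gx gy : ℝ × ℝ → ℝ) : Prop where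
  memL2 : MemLp u 2 (volume.restrict Omega)
  weakX : HasWeakDerivXOn Omega u gx
  weakY : HasWeakDerivYOn Omega u gy
  wgx : MemLp (fun p => p.2 ^ α₁ * gx p) 2 (volume.restrict Omega)
  wgy : MemLp (fun p => p.1 ^ α₂ * gy p) 2 (volume.restrict Omega)

/-- The `𝓗¹(Ω)` norm of `u` (with weak derivatives `gx, gy`). -/
def H1Norm (α₁ α₂ : ℝ) (u gx gy : ℝ × ℝ → ℝ) : ℝ :=
  Real.sqrt ((∫ p in Omega, (u p) ^ 2) +
    (∫ p in Omega, (p.2 ^ α₁ * gx p) ^ 2) +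
    (∫ p in Omega, (p.1 ^ α₂ * gy p) ^ 2))

/-- Membership in `𝓗₀¹(Ω)`: member of `𝓗¹(Ω)` approximable in the `𝓗¹` norm by
test functions. -/
def MemH10 (α₁ α₂ : ℝ) (u gx gy : ℝ × ℝ → ℝ) : Prop :=
  MemH1 α₁ α₂ u gx gy ∧
  ∀ ε : ℝ, 0 < ε → ∃ φ : ℝ × ℝ → ℝ, IsTest φ ∧
    H1Norm α₁ α₂ (fun p => u p - φ p) (fun p => gx p - pdx φ p)
      (fun p => gy p - pdy φ p) < ε

/-- Membership in `H₀(Ω) = {u ∈ 𝓗₀¹(Ω) : ∫_Ω V u² < ∞}`. -/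
def MemH0 (α₁ α₂ : ℝ) (V u gx gy : ℝ × ℝ → ℝ) : Prop :=
  MemH10 α₁ α₂ u gx gy ∧
  IntegrableOn (fun p => V p * (u p) ^ 2) Omega volume

/-- The bilinear form `a(u,v)` associated with the sub-elliptic operator with potential `V`. -/
def aForm (α₁ α₂ : ℝ) (V u gx gy v hx hy : ℝ × ℝ → ℝ) : ℝ :=
  ∫ p in Omega, ((p.2 ^ α₁ * gx p) * (p.2 ^ α₁ * hx p) +
    (p.1 ^ α₂ * gy p) * (p.1 ^ α₂ * hy p) + V p * u p * v p)

/-- The bilinear form `a₁(u,v)` (no potential). -/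
def a1Form (α₁ α₂ : ℝ) (u gx gy v hx hy : ℝ × ℝ → ℝ) : ℝ :=
  ∫ p in Omega, ((p.2 ^ α₁ * gx p) * (p.2 ^ α₁ * hx p) +
    (p.1 ^ α₂ * gy p) * (p.1 ^ α₂ * hy p))

/-- Membership in `S_p = {V ∈ L^p(Ω) : V ≥ 0 a.e., ‖V‖_{L^p(Ω)} ≤ M}`. -/
def MemSp (ppow M : ℝ) (V : ℝ × ℝ → ℝ) : Prop :=
  MemLp V (ENNReal.ofReal ppow) (volume.restrict Omega) ∧
  (∀ᵐ p ∂(volume.restrict Omega), 0 ≤ V p) ∧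
  eLpNorm V (ENNReal.ofReal ppow) (volume.restrict Omega) ≤ ENNReal.ofReal M

/-- `u` (with weak derivatives `gx, gy`) is an eigenfunction of the sub-elliptic operator
with potential `V` for the eigenvalue `lam`. -/
def IsEigenfun (α₁ α₂ : ℝ) (V : ℝ × ℝ → ℝ) (lam : ℝ) (u gx gy : ℝ × ℝ → ℝ) : Prop :=
  MemH0 α₁ α₂ V u gx gy ∧
  ∀ v hx hy : ℝ × ℝ → ℝ, MemH0 α₁ α₂ V v hx hy →
    aForm α₁ α₂ V u gx gy v hx hy = lam * ∫ p in Omega, u p * v p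

/-- The first eigenvalue `λ₁(V) = inf { a(u,u) : u ∈ H₀(Ω), ‖u‖_{L²} = 1 }`. -/
def lam1 (α₁ α₂ : ℝ) (V : ℝ × ℝ → ℝ) : ℝ :=
  sInf { r | ∃ u gx gy : ℝ × ℝ → ℝ, MemH0 α₁ α₂ V u gx gy ∧
    (∫ p in Omega, (u p) ^ 2) = 1 ∧ r = aForm α₁ α₂ V u gx gy u gx gy }

/-- `sup { a(u,u) : u ∈ span(φ), ‖u‖_{L²(Ω)} = 1 }` for a finite family `φ` with
weak derivatives `φx, φy`. -/
def rayleighSup (α₁ α₂ : ℝ) (V : ℝ × ℝ → ℝ) {k : ℕ} (φ φx φy : Fin k → ℝ × ℝ → ℝ) : ℝ :=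
  sSup { s | ∃ c : Fin k → ℝ,
    (∫ p in Omega, (∑ i, c i * φ i p) ^ 2) = 1 ∧
    s = aForm α₁ α₂ V (fun p => ∑ i, c i * φ i p) (fun p => ∑ i, c i * φx i p)
      (fun p => ∑ i, c i * φy i p) (fun p => ∑ i, c i * φ i p)
      (fun p => ∑ i, c i * φx i p) (fun p => ∑ i, c i * φy i p) }

/-- The set of values `sup { a(u,u) : u ∈ E, ‖u‖ = 1 }` over `k`-dimensional
subspaces `E` of `H₀(Ω)` (represented by `L²(Ω)`-linearly independent families of
`k` elements of `H₀(Ω)`). -/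
def minmaxSet (α₁ α₂ : ℝ) (V : ℝ × ℝ → ℝ) (k : ℕ) : Set ℝ :=
  { r | ∃ φ φx φy : Fin k → ℝ × ℝ → ℝ,
      (∀ i, MemH0 α₁ α₂ V (φ i) (φx i) (φy i)) ∧
      (∀ c : Fin k → ℝ, (∀ᵐ p ∂(volume.restrict Omega), ∑ i, c i * φ i p = 0) → c = 0) ∧
      r = rayleighSup α₁ α₂ V φ φx φy }

/-- The `k`-th eigenvalue via the min-max principle. -/
def lamk (α₁ α₂ : ℝ) (V : ℝ × ℝ → ℝ) (k : ℕ) : ℝ := sInf (minmaxSet α₁ α₂ V k)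

/-- Membership in `U = (𝓗₀¹(Ω) ∩ L^{2q}(Ω)) \ {0}`. -/
def MemU (α₁ α₂ qe : ℝ) (u gx gy : ℝ × ℝ → ℝ) : Prop :=
  MemH10 α₁ α₂ u gx gy ∧
  MemLp u (ENNReal.ofReal (2 * qe)) (volume.restrict Omega) ∧
  ¬ (∀ᵐ p ∂(volume.restrict Omega), u p = 0)

/-- The functional `J(u) = (a₁(u,u) + M ‖u‖_{L^{2q}(Ω)}²) / ‖u‖_{L²(Ω)}²`. -/
def Jfun (α₁ α₂ M qe : ℝ) (u gx gy : ℝ × ℝ → ℝ) : ℝ :=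
  (a1Form α₁ α₂ u gx gy u gx gy +
    M * (∫ p in Omega, |u p| ^ (2 * qe)) ^ (1 / qe)) / (∫ p in Omega, (u p) ^ 2)

open scoped Topology

section L2basics
variable {X : Type*} [MeasurableSpace X] {μ : Measure X}

lemma N2_nonneg (f : X → ℝ) : 0 ≤ ∫ x, f x ^ 2 ∂μ := integral_nonneg fun _ => sq_nonneg _

lemma integral_add3 {f g h : X → ℝ} (hf : Integrable f μ) (hg : Integrable g μ)
    (hh : Integrable h μ) :
    ∫ x, (f x + g x + h x) ∂μ = (∫ x, f x ∂μ) + (∫ x, g x ∂μ) + ∫ x, h x ∂μ := by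
  have h1 : Integrable (fun x => f x + g x) μ := hf.add hg
  rw [integral_add h1 hh, integral_add hf hg]

lemma L2_mul {f g : X → ℝ} (hf : MemLp f 2 μ) (hg : MemLp g 2 μ) :
    Integrable (fun x => f x * g x) μ := hf.integrable_mul hg

lemma N2_add_le {f g : X → ℝ} (hf : MemLp f 2 μ) (hg : MemLp g 2 μ) :
    ∫ x, (f x + g x) ^ 2 ∂μ ≤ 2 * (∫ x, f x ^ 2 ∂μ) + 2 * ∫ x, g x ^ 2 ∂μ := by
  rw [← integral_const_mul, ← integral_const_mul, ← integral_add (hf.integrable_sq.const_mul 2) (hg.integrable_sq.const_mul 2)]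
  refine integral_mono (hf.add hg).integrable_sq
    ((hf.integrable_sq.const_mul 2).add (hg.integrable_sq.const_mul 2)) fun x => ?_
  simp only
  nlinarith [sq_nonneg (f x - g x)]

lemma L2_CS {f g : X → ℝ} (hf : MemLp f 2 μ) (hg : MemLp g 2 μ) :
    (∫ x, f x * g x ∂μ) ^ 2 ≤ (∫ x, f x ^ 2 ∂μ) * ∫ x, g x ^ 2 ∂μ := by
  have h : ∀ t : ℝ, 0 ≤ (∫ x, g x ^ 2 ∂μ) * (t * t) + (2 * ∫ x, f x * g x ∂μ) * t
      + ∫ x, f x ^ 2 ∂μ := by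
    intro t
    have h0 : 0 ≤ ∫ x, (f x + t * g x) ^ 2 ∂μ := N2_nonneg _
    have h1 : ∫ x, (f x + t * g x) ^ 2 ∂μ = ∫ x, ((t * t) * g x ^ 2 + (2 * t) * (f x * g x)
        + f x ^ 2) ∂μ := by
      congr 1; ext x; ring
    have i1 := hg.integrable_sq.const_mul (t * t)
    have i2 := (L2_mul hf hg).const_mul (2 * t)
    rw [h1, integral_add3 i1 i2 hf.integrable_sq, integral_const_mul,
      integral_const_mul] at h0
    linarith
  have := discrim_le_zero h
  unfold discrim at this
  nlinarith

lemma L2_tendsto_mul {f g : X → ℝ} {fn gn : ℕ → X → ℝ} (hf : MemLp f 2 μ) (hg : MemLp g 2 μ)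
    (hfn : ∀ n, MemLp (fn n) 2 μ) (hgn : ∀ n, MemLp (gn n) 2 μ)
    (h1 : Tendsto (fun n => ∫ x, (fn n x - f x) ^ 2 ∂μ) atTop (𝓝 0))
    (h2 : Tendsto (fun n => ∫ x, (gn n x - g x) ^ 2 ∂μ) atTop (𝓝 0)) :
    Tendsto (fun n => ∫ x, fn n x * gn n x ∂μ) atTop (𝓝 (∫ x, f x * g x ∂μ)) := by
  have key : ∀ n, |(∫ x, fn n x * gn n x ∂μ) - ∫ x, f x * g x ∂μ| ≤
      √((∫ x, (fn n x - f x) ^ 2 ∂μ) * ∫ x, (gn n x - g x) ^ 2 ∂μ) +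
      √((∫ x, (fn n x - f x) ^ 2 ∂μ) * ∫ x, g x ^ 2 ∂μ) +
      √((∫ x, f x ^ 2 ∂μ) * ∫ x, (gn n x - g x) ^ 2 ∂μ) := by
    intro n
    have e1 : MemLp (fun x => fn n x - f x) 2 μ := hfn n |>.sub hf
    have e2 : MemLp (fun x => gn n x - g x) 2 μ := hgn n |>.sub hg
    have : (∫ x, fn n x * gn n x ∂μ) - ∫ x, f x * g x ∂μ =
        (∫ x, (fn n x - f x) * (gn n x - g x) ∂μ) + (∫ x, (fn n x - f x) * g x ∂μ)
        + ∫ x, f x * (gn n x - g x) ∂μ := by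
      rw [← integral_sub (L2_mul (hfn n) (hgn n)) (L2_mul hf hg),
        ← integral_add3 (L2_mul e1 e2) (L2_mul e1 hg) (L2_mul hf e2)]
      congr 1; ext x; ring
    rw [this]
    refine (abs_add_three _ _ _).trans ?_
    gcongr
    · exact Real.abs_le_sqrt (L2_CS e1 e2)
    · exact Real.abs_le_sqrt (L2_CS e1 hg)
    · exact Real.abs_le_sqrt (L2_CS hf e2)
  rw [tendsto_iff_dist_tendsto_zero]
  refine squeeze_zero (fun _ => dist_nonneg) key ?_
  have a1 := (h1.mul h2).sqrt
  have a2 := (h1.mul_const (∫ x, g x ^ 2 ∂μ)).sqrt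
  have a3 := (h2.const_mul (∫ x, f x ^ 2 ∂μ)).sqrt
  simpa using (a1.add a2).add a3

lemma L2_tendsto_sq {f : X → ℝ} {fn : ℕ → X → ℝ} (hf : MemLp f 2 μ)
    (hfn : ∀ n, MemLp (fn n) 2 μ)
    (h1 : Tendsto (fun n => ∫ x, (fn n x - f x) ^ 2 ∂μ) atTop (𝓝 0)) :
    Tendsto (fun n => ∫ x, fn n x ^ 2 ∂μ) atTop (𝓝 (∫ x, f x ^ 2 ∂μ)) := by
  simpa only [sq] using L2_tendsto_mul hf hf hfn hfn h1 h1

lemma L2_norm_sq {f : X → ℝ} (hf : MemLp f 2 μ) : ‖hf.toLp f‖ ^ 2 = ∫ x, f x ^ 2 ∂μ := by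
  rw [← real_inner_self_eq_norm_sq, L2.inner_def]
  refine integral_congr_ae ?_
  filter_upwards [hf.coeFn_toLp] with x hx
  rw [hx]; simp [sq]

lemma L2_complete {fn : ℕ → X → ℝ} (hfn : ∀ n, MemLp (fn n) 2 μ)
    (h : ∀ ε > 0, ∃ N, ∀ m ≥ N, ∀ n ≥ N, ∫ x, (fn m x - fn n x) ^ 2 ∂μ < ε) :
    ∃ f, MemLp f 2 μ ∧ Tendsto (fun n => ∫ x, (fn n x - f x) ^ 2 ∂μ) atTop (𝓝 0) := by
  have hc : CauchySeq fun n => (hfn n).toLp (fn n) := by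
    rw [Metric.cauchySeq_iff]
    intro ε hε
    obtain ⟨N, hN⟩ := h (ε ^ 2) (by positivity)
    refine ⟨N, fun m hm n hn => ?_⟩
    rw [dist_eq_norm, ← MemLp.toLp_sub]
    have := L2_norm_sq ((hfn m).sub (hfn n))
    refine lt_of_pow_lt_pow_left₀ 2 hε.le ?_
    rw [this]; exact hN m hm n hn
  obtain ⟨F, hF⟩ := cauchySeq_tendsto_of_complete hc
  refine ⟨F, Lp.memLp F, ?_⟩
  have := (tendsto_iff_norm_sub_tendsto_zero.1 hF).pow 2
  simp only [ne_eq, OfNat.ofNat_ne_zero, not_false_eq_true, zero_pow] at this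
  refine this.congr fun n => ?_
  have e := L2_norm_sq ((hfn n).sub (Lp.memLp F))
  rw [MemLp.toLp_sub (hfn n) (Lp.memLp F), Lp.toLp_coeFn] at e
  exact e

lemma L2_subseq {f : X → ℝ} {fn : ℕ → X → ℝ} (hf : MemLp f 2 μ)
    (hfn : ∀ n, MemLp (fn n) 2 μ)
    (h1 : Tendsto (fun n => ∫ x, (fn n x - f x) ^ 2 ∂μ) atTop (𝓝 0)) :
    ∃ ns : ℕ → ℕ, StrictMono ns ∧ ∀ᵐ x ∂μ, Tendsto (fun k => fn (ns k) x) atTop (𝓝 (f x)) := by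
  have h : Tendsto (fun n => (hfn n).toLp (fn n)) atTop (𝓝 (hf.toLp f)) := by
    rw [tendsto_iff_norm_sub_tendsto_zero]
    have := h1.sqrt
    simp only [Real.sqrt_zero] at this
    refine this.congr fun n => ?_
    have e := L2_norm_sq ((hfn n).sub hf)
    simp only [Pi.sub_apply] at e
    rw [← e, Real.sqrt_sq (norm_nonneg _), MemLp.toLp_sub]
  obtain ⟨ns, hns, hh⟩ := (tendstoInMeasure_of_tendsto_Lp h).exists_seq_tendsto_ae
  refine ⟨ns, hns, ?_⟩
  have hall : ∀ᵐ x ∂μ, ∀ n, (hfn n).toLp (fn n) x = fn n x :=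
    ae_all_iff.2 fun n => (hfn n).coeFn_toLp
  filter_upwards [hh, hall, hf.coeFn_toLp] with x h1 h2 h3
  rw [h3] at h1
  exact h1.congr fun k => h2 _

end L2basics

lemma pdx_hasDerivAt {φ : ℝ × ℝ → ℝ} (hφ : ContDiff ℝ 1 φ) (y t : ℝ) :
    HasDerivAt (fun s => φ (s, y)) (pdx φ (t, y)) t := by
  have h1 : HasFDerivAt φ (fderiv ℝ φ (t, y)) (t, y) :=
    (hφ.differentiable (by norm_num) _).hasFDerivAt
  have h2 : HasDerivAt (fun s : ℝ => (s, y)) ((1 : ℝ), (0 : ℝ)) t :=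
    (hasDerivAt_id t).prodMk (hasDerivAt_const t y)
  exact h1.comp_hasDerivAt t h2

lemma pdy_hasDerivAt {φ : ℝ × ℝ → ℝ} (hφ : ContDiff ℝ 1 φ) (x t : ℝ) :
    HasDerivAt (fun s => φ (x, s)) (pdy φ (x, t)) t := by
  have h1 : HasFDerivAt φ (fderiv ℝ φ (x, t)) (x, t) :=
    (hφ.differentiable (by norm_num) _).hasFDerivAt
  have h2 : HasDerivAt (fun s : ℝ => (x, s)) ((0 : ℝ), (1 : ℝ)) t :=
    (hasDerivAt_const t x).prodMk (hasDerivAt_id t)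
  exact h1.comp_hasDerivAt t h2

lemma pdx_cont {φ : ℝ × ℝ → ℝ} (hφ : ContDiff ℝ 1 φ) : Continuous (pdx φ) :=
  (hφ.continuous_fderiv (by norm_num)).clm_apply continuous_const

lemma pdy_cont {φ : ℝ × ℝ → ℝ} (hφ : ContDiff ℝ 1 φ) : Continuous (pdy φ) :=
  (hφ.continuous_fderiv (by norm_num)).clm_apply continuous_const

/-- One-dimensional oscillation bound. -/
lemma osc_bound {f f' : ℝ → ℝ} (hf : ∀ t, HasDerivAt f (f' t) t) (hc : Continuous f')
    {a b x y : ℝ} (hx : x ∈ Icc a b) (hy : y ∈ Icc a b) :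
    |f x - f y| ≤ ∫ t in Ioc a b, |f' t| := by
  wlog hxy : y ≤ x generalizing x y
  · rw [abs_sub_comm]; exact this hy hx (le_of_not_ge hxy)
  have h := intervalIntegral.integral_eq_sub_of_hasDerivAt (fun t _ => hf t)
    (hc.intervalIntegrable y x)
  rw [← h]
  refine (intervalIntegral.abs_integral_le_integral_abs hxy).trans ?_
  rw [intervalIntegral.integral_of_le hxy]
  exact setIntegral_mono_set (hc.abs.integrableOn_Ioc) (ae_of_all _ fun _ => abs_nonneg _)
    (Ioc_subset_Ioc hy.1 hx.2).eventuallyLE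

/-- Square `(a,a+h] × (b,b+h]`. -/
def sqr (a b h : ℝ) : Set (ℝ × ℝ) := Ioc a (a + h) ×ˢ Ioc b (b + h)

lemma sqr_meas (a b h : ℝ) : MeasurableSet (sqr a b h) := measurableSet_Ioc.prod measurableSet_Ioc

lemma sqr_restrict (a b h : ℝ) : (volume.restrict (sqr a b h) : Measure (ℝ × ℝ)) =
    (volume.restrict (Ioc a (a + h))).prod (volume.restrict (Ioc b (b + h))) := by
  rw [Measure.prod_restrict]; rfl

lemma cont_int_sqr {f : ℝ × ℝ → ℝ} (hf : Continuous f) (a b h : ℝ) :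
    Integrable f (volume.restrict (sqr a b h)) := by
  have : IntegrableOn f (Icc a (a + h) ×ˢ Icc b (b + h)) :=
    hf.continuousOn.integrableOn_compact (isCompact_Icc.prod isCompact_Icc)
  exact this.mono_set (prod_mono Ioc_subset_Icc_self Ioc_subset_Icc_self)

lemma poincare_smooth {φ : ℝ × ℝ → ℝ} (hφ : ContDiff ℝ 1 φ) (a b : ℝ) {h : ℝ} (hh : 0 < h) :
    ∫ p in sqr a b h, φ p ^ 2 ≤
      ((∫ p in sqr a b h, |pdx φ p|) + ∫ p in sqr a b h, |pdy φ p|) ^ 2 +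
      (∫ p in sqr a b h, φ p) ^ 2 / h ^ 2 := by
  set μI : Measure ℝ := volume.restrict (Ioc a (a + h)) with hI
  set μJ : Measure ℝ := volume.restrict (Ioc b (b + h)) with hJ
  have rI : μI.real univ = h := by simp [hI, hh.le]
  have rJ : μJ.real univ = h := by simp [hJ, hh.le]
  set bf : ℝ → ℝ := fun y => ∫ t, |pdx φ (t, y)| ∂μI with hbf
  set af : ℝ → ℝ := fun x => ∫ t, |pdy φ (x, t)| ∂μJ with haf
  have cx := (pdx_cont hφ).abs
  have cy := (pdy_cont hφ).abs
  have ix := cont_int_sqr cx a b h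
  have iy := cont_int_sqr cy a b h
  have iφ := cont_int_sqr hφ.continuous a b h
  have iφ2 : Integrable (fun p => φ p ^ 2) (volume.restrict (sqr a b h)) :=
    cont_int_sqr (hφ.continuous.pow 2) a b h
  have hmem : ∀ᵐ p ∂(volume.restrict (sqr a b h)), p ∈ sqr a b h :=
    ae_restrict_mem (sqr_meas a b h)
  rw [sqr_restrict] at *
  set μQ := μI.prod μJ with hQ
  set m : ℝ := (∫ p, φ p ∂μQ) / h ^ 2 with hm
  set A : ℝ := ∫ p, |pdy φ p| ∂μQ with hA
  set B : ℝ := ∫ p, |pdx φ p| ∂μQ with hB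
  have hA' : ∫ x, af x ∂μI = A := (integral_prod _ iy).symm
  have hB' : ∫ y, bf y ∂μJ = B := (integral_prod_symm _ ix).symm
  have iaf : Integrable af μI := iy.integral_prod_left
  have ibf : Integrable bf μJ := ix.integral_prod_right
  have rQ : μQ.real univ = h ^ 2 := by
    rw [hQ, ← univ_prod_univ, measureReal_prod_prod, rI, rJ, sq]
  have A0 : 0 ≤ A := integral_nonneg fun _ => abs_nonneg _
  have B0 : 0 ≤ B := integral_nonneg fun _ => abs_nonneg _
  have oscx : ∀ p ∈ sqr a b h, ∀ q ∈ sqr a b h, |φ p - φ q| ≤ bf p.2 + af q.1 := by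
    rintro ⟨x, y⟩ hp ⟨x', y'⟩ hq
    have e1 := osc_bound (pdx_hasDerivAt hφ y) ((pdx_cont hφ).comp (by fun_prop))
      (Ioc_subset_Icc_self hp.1) (Ioc_subset_Icc_self hq.1)
    have e2 := osc_bound (pdy_hasDerivAt hφ x') ((pdy_cont hφ).comp (by fun_prop))
      (Ioc_subset_Icc_self hp.2) (Ioc_subset_Icc_self hq.2)
    calc |φ (x, y) - φ (x', y')| ≤ |φ (x, y) - φ (x', y)| + |φ (x', y) - φ (x', y')| :=
          abs_sub_le _ _ _
      _ ≤ _ := add_le_add e1 e2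
  have oscm : ∀ p, φ p - m = (∫ q, (φ p - φ q) ∂μQ) / h ^ 2 := by
    intro p
    rw [integral_sub (integrable_const _) iφ, integral_const, rQ, hm]
    simp only [smul_eq_mul]
    field_simp
  have iaf' : Integrable (fun p : ℝ × ℝ => af p.1) μQ := iaf.comp_fst μJ
  have ibf' : Integrable (fun p : ℝ × ℝ => bf p.2) μQ := ibf.comp_snd μI
  have bd1 : ∀ p ∈ sqr a b h, |φ p - m| ≤ bf p.2 + A / h := by
    intro p hp
    rw [oscm, abs_div, abs_of_pos (by positivity : 0 < h ^ 2), div_le_iff₀ (by positivity)]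
    calc |∫ q, (φ p - φ q) ∂μQ| ≤ ∫ q, |φ p - φ q| ∂μQ := abs_integral_le_integral_abs
      _ ≤ ∫ q, (bf p.2 + af q.1) ∂μQ := by
          refine integral_mono_ae ((integrable_const _).sub iφ).abs
            ((integrable_const _).add iaf') ?_
          filter_upwards [hmem] with q hq using oscx p hp q hq
      _ = _ := by
          rw [integral_add (integrable_const _) iaf', integral_const, rQ, hQ, integral_fun_fst, rJ,
            hA']
          simp only [smul_eq_mul]; field_simp
  have bd2 : ∀ p ∈ sqr a b h, |φ p - m| ≤ af p.1 + B / h := by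
    intro p hp
    rw [oscm, abs_div, abs_of_pos (by positivity : 0 < h ^ 2), div_le_iff₀ (by positivity)]
    calc |∫ q, (φ p - φ q) ∂μQ| ≤ ∫ q, |φ p - φ q| ∂μQ := abs_integral_le_integral_abs
      _ ≤ ∫ q, (af p.1 + bf q.2) ∂μQ := by
          refine integral_mono_ae ((integrable_const _).sub iφ).abs
            ((integrable_const _).add ibf') ?_
          filter_upwards [hmem] with q hq
          rw [abs_sub_comm, add_comm]; exact oscx q hq p hp
      _ = _ := by
          rw [integral_add (integrable_const _) ibf', integral_const, rQ, hQ, integral_fun_snd, rI,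
            hB']
          simp only [smul_eq_mul]; field_simp
  have i1 : Integrable (fun x => af x + B / h) μI := iaf.add (integrable_const _)
  have i2 : Integrable (fun x => bf x + A / h) μJ := ibf.add (integrable_const _)
  have main : ∫ p, (φ p - m) ^ 2 ∂μQ ≤ (B + A) ^ 2 := by
    have ei : Integrable (fun p => (φ p - m) ^ 2) μQ := by
      have : (fun p => (φ p - m) ^ 2) = fun p => φ p ^ 2 - (2 * m) * φ p + m ^ 2 := by
        ext p; ring
      rw [this]
      exact (iφ2.sub (iφ.const_mul _)).add (integrable_const _)
    calc ∫ p, (φ p - m) ^ 2 ∂μQ ≤ ∫ p, (af p.1 + B / h) * (bf p.2 + A / h) ∂μQ := by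
          refine integral_mono_ae ei (i1.mul_prod i2) ?_
          filter_upwards [hmem] with p hp
          rw [← sq_abs, sq]
          exact mul_le_mul (bd2 p hp) (bd1 p hp) (abs_nonneg _) ((abs_nonneg _).trans (bd2 p hp))
      _ = (∫ x, (af x + B / h) ∂μI) * ∫ y, (bf y + A / h) ∂μJ :=
          integral_prod_mul (fun x => af x + B / h) (fun y => bf y + A / h)
      _ = _ := by
          rw [integral_add iaf (integrable_const _), integral_add ibf (integrable_const _), hA',
            hB', integral_const, integral_const, rI, rJ]
          simp only [smul_eq_mul]; field_simp; ring
  have expand : ∫ p, φ p ^ 2 ∂μQ = (∫ p, (φ p - m) ^ 2 ∂μQ) + (∫ p, φ p ∂μQ) ^ 2 / h ^ 2 := by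
    have : (fun p => (φ p - m) ^ 2) = fun p => φ p ^ 2 + (-(2 * m)) * φ p + m ^ 2 := by
      ext p; ring
    rw [this, integral_add3 iφ2 (iφ.const_mul _) (integrable_const _), integral_const_mul,
      integral_const, rQ, hm]
    simp only [smul_eq_mul]; field_simp; ring
  rw [expand]; linarith

/-- Lebesgue measure on the unit square. -/
abbrev muO : Measure (ℝ × ℝ) := volume.restrict Omega

lemma Omega_meas : MeasurableSet Omega := measurableSet_Ioo.prod measurableSet_Ioo

lemma Omega_open : IsOpen Omega := isOpen_Ioo.prod isOpen_Ioo

lemma muO_eq : muO = volume.restrict (Ioc (0:ℝ) 1 ×ˢ Ioc (0:ℝ) 1) := by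
  unfold muO Omega
  rw [Measure.volume_eq_prod, ← Measure.prod_restrict, ← Measure.prod_restrict,
    restrict_Ioo_eq_restrict_Ioc]

instance muO_fin : IsFiniteMeasure muO := by
  rw [muO_eq, Measure.volume_eq_prod, ← Measure.prod_restrict]
  infer_instance

lemma muO_mem : ∀ᵐ p ∂muO, p ∈ Omega := ae_restrict_mem Omega_meas

lemma IsTest.c1 {φ : ℝ × ℝ → ℝ} (h : IsTest φ) : ContDiff ℝ 1 φ := h.1.of_le (by exact_mod_cast le_top)

lemma IsTest.pdx_supp {φ : ℝ × ℝ → ℝ} (h : IsTest φ) : HasCompactSupport (pdx φ) :=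
  h.2.1.fderiv_apply ℝ (1, 0)

lemma IsTest.pdy_supp {φ : ℝ × ℝ → ℝ} (h : IsTest φ) : HasCompactSupport (pdy φ) :=
  h.2.1.fderiv_apply ℝ (0, 1)

lemma cs_memLp {f : ℝ × ℝ → ℝ} (hc : Continuous f) (hs : HasCompactSupport f) : MemLp f 2 muO :=
  (hc.memLp_of_hasCompactSupport hs).restrict _

lemma wy_cont {α : ℝ} (hα : 0 < α) : Continuous (fun p : ℝ × ℝ => p.2 ^ α) :=
  continuous_snd.rpow_const fun _ => Or.inr hα.le

lemma wx_cont {α : ℝ} (hα : 0 < α) : Continuous (fun p : ℝ × ℝ => p.1 ^ α) :=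
  continuous_fst.rpow_const fun _ => Or.inr hα.le

lemma IsTest.m0 {φ : ℝ × ℝ → ℝ} (h : IsTest φ) : MemLp φ 2 muO := cs_memLp h.1.continuous h.2.1

lemma IsTest.mx {φ : ℝ × ℝ → ℝ} (h : IsTest φ) {α : ℝ} (hα : 0 < α) :
    MemLp (fun p => p.2 ^ α * pdx φ p) 2 muO :=
  cs_memLp ((wy_cont hα).mul (pdx_cont h.c1)) (h.pdx_supp.mul_left)

lemma IsTest.my {φ : ℝ × ℝ → ℝ} (h : IsTest φ) {α : ℝ} (hα : 0 < α) :
    MemLp (fun p => p.1 ^ α * pdy φ p) 2 muO :=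
  cs_memLp ((wx_cont hα).mul (pdy_cont h.c1)) (h.pdy_supp.mul_left)

/-- Closure of test functions, in weighted coordinates. -/
def Cl (α₁ α₂ : ℝ) (u X Y : ℝ × ℝ → ℝ) : Prop :=
  MemLp u 2 muO ∧ MemLp X 2 muO ∧ MemLp Y 2 muO ∧
  ∀ ε > 0, ∃ φ, IsTest φ ∧ ∫ p, (φ p - u p) ^ 2 ∂muO < ε ∧
    ∫ p, (p.2 ^ α₁ * pdx φ p - X p) ^ 2 ∂muO < ε ∧
    ∫ p, (p.1 ^ α₂ * pdy φ p - Y p) ^ 2 ∂muO < ε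

lemma tend_of_lt {a : ℕ → ℝ} (h0 : ∀ n, 0 ≤ a n) (h1 : ∀ n, a n < 1 / ((n : ℝ) + 1)) :
    Tendsto a atTop (𝓝 0) :=
  squeeze_zero h0 (fun n => (h1 n).le) tendsto_one_div_add_atTop_nhds_zero_nat

lemma Cl.seq {α₁ α₂ : ℝ} {u X Y : ℝ × ℝ → ℝ} (h : Cl α₁ α₂ u X Y) :
    ∃ φ : ℕ → ℝ × ℝ → ℝ, (∀ n, IsTest (φ n)) ∧
      Tendsto (fun n => ∫ p, (φ n p - u p) ^ 2 ∂muO) atTop (𝓝 0) ∧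
      Tendsto (fun n => ∫ p, (p.2 ^ α₁ * pdx (φ n) p - X p) ^ 2 ∂muO) atTop (𝓝 0) ∧
      Tendsto (fun n => ∫ p, (p.1 ^ α₂ * pdy (φ n) p - Y p) ^ 2 ∂muO) atTop (𝓝 0) := by
  choose φ h1 h2 h3 h4 using fun n : ℕ => h.2.2.2 (1 / ((n : ℝ) + 1)) (by positivity)
  exact ⟨φ, h1, tend_of_lt (fun _ => N2_nonneg _) h2, tend_of_lt (fun _ => N2_nonneg _) h3,
    tend_of_lt (fun _ => N2_nonneg _) h4⟩

lemma wint {α : ℝ} (hα : α ∈ Ioo (0:ℝ) (1/2)) :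
    IntegrableOn (fun t : ℝ => (t ^ (-α)) ^ 2) (Ioc 0 1) ∧
    ∫ t in Ioc (0:ℝ) 1, (t ^ (-α)) ^ 2 = 1 / (1 - 2 * α) := by
  obtain ⟨h0, h1⟩ := hα
  have e : ∀ t ∈ Ioc (0:ℝ) 1, t ^ (-(2 * α)) = (t ^ (-α)) ^ 2 := by
    intro t ht
    rw [← Real.rpow_natCast, ← Real.rpow_mul ht.1.le]; congr 1; push_cast; ring
  have i := intervalIntegral.intervalIntegrable_rpow' (a := 0) (b := 1)
    (by linarith : -1 < -(2 * α))
  rw [intervalIntegrable_iff_integrableOn_Ioc_of_le zero_le_one] at i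
  refine ⟨i.congr_fun e measurableSet_Ioc, ?_⟩
  rw [← setIntegral_congr_fun measurableSet_Ioc e, ← intervalIntegral.integral_of_le zero_le_one,
    integral_rpow (Or.inl (by linarith))]
  rw [Real.one_rpow, Real.zero_rpow (by linarith)]
  congr 1 <;> ring

lemma wint_sub {α : ℝ} (hα : α ∈ Ioo (0:ℝ) (1/2)) {b h : ℝ} (hb : 0 ≤ b) (hb1 : b + h ≤ 1) :
    IntegrableOn (fun t : ℝ => (t ^ (-α)) ^ 2) (Ioc b (b + h)) ∧
    ∫ t in Ioc b (b + h), (t ^ (-α)) ^ 2 ≤ 1 / (1 - 2 * α) := by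
  obtain ⟨h1, h2⟩ := wint hα
  have hs : Ioc b (b + h) ⊆ Ioc 0 1 := Ioc_subset_Ioc hb hb1
  refine ⟨h1.mono_set hs, ?_⟩
  rw [← h2]
  exact setIntegral_mono_set h1 (ae_of_all _ fun _ => sq_nonneg _) hs.eventuallyLE

lemma sqr_sub {a b h : ℝ} (ha : 0 ≤ a) (hb : 0 ≤ b) (ha1 : a + h ≤ 1) (hb1 : b + h ≤ 1) :
    sqr a b h ⊆ Ioc (0:ℝ) 1 ×ˢ Ioc (0:ℝ) 1 :=
  prod_mono (Ioc_subset_Ioc ha ha1) (Ioc_subset_Ioc hb hb1)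

lemma sqr_le {a b h : ℝ} (ha : 0 ≤ a) (hb : 0 ≤ b) (ha1 : a + h ≤ 1) (hb1 : b + h ≤ 1) :
    volume.restrict (sqr a b h) ≤ muO := by
  rw [muO_eq]; exact Measure.restrict_mono_set _ (sqr_sub ha hb ha1 hb1)

lemma cs_step {μ : Measure (ℝ × ℝ)} {f w w' : ℝ × ℝ → ℝ} {C : ℝ}
    (hw : AEStronglyMeasurable w μ) (hi : Integrable (fun p => w p ^ 2) μ)
    (hC : ∫ p, w p ^ 2 ∂μ ≤ C)
    (h1 : ∀ᵐ p ∂μ, w p * w' p = 1) (hw' : ∀ᵐ p ∂μ, 0 ≤ w p)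
    (hg : MemLp (fun p => w' p * f p) 2 μ) :
    (∫ p, |f p| ∂μ) ^ 2 ≤ C * ∫ p, (w' p * f p) ^ 2 ∂μ := by
  have m1 : MemLp w 2 μ := (memLp_two_iff_integrable_sq hw).2 hi
  have m2 : MemLp (fun p => |w' p * f p|) 2 μ := hg.norm
  have e : ∫ p, |f p| ∂μ = ∫ p, w p * |w' p * f p| ∂μ := by
    refine integral_congr_ae ?_
    filter_upwards [h1, hw'] with p hp hp'
    calc |f p| = |(w p * w' p) * f p| := by rw [hp, one_mul]
      _ = w p * |w' p * f p| := by rw [mul_assoc, abs_mul, abs_of_nonneg hp']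
  rw [e]
  refine (L2_CS m1 m2).trans ?_
  simp only [sq_abs]
  exact mul_le_mul_of_nonneg_right hC (N2_nonneg _)

/-- Poincaré constant. -/
def kap (α₁ α₂ : ℝ) : ℝ := 2 / (1 - 2 * α₁) + 2 / (1 - 2 * α₂)

lemma poincare_test {α₁ α₂ : ℝ} (h1 : α₁ ∈ Ioo (0:ℝ) (1/2)) (h2 : α₂ ∈ Ioo (0:ℝ) (1/2))
    {φ : ℝ × ℝ → ℝ} (hφ : IsTest φ) {a b h : ℝ} (hh : 0 < h)
    (ha : 0 ≤ a) (hb : 0 ≤ b) (ha1 : a + h ≤ 1) (hb1 : b + h ≤ 1) :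
    ∫ p in sqr a b h, φ p ^ 2 ≤
      h * kap α₁ α₂ * ((∫ p in sqr a b h, (p.2 ^ α₁ * pdx φ p) ^ 2) +
        ∫ p in sqr a b h, (p.1 ^ α₂ * pdy φ p) ^ 2) +
      (∫ p in sqr a b h, φ p) ^ 2 / h ^ 2 := by
  refine (poincare_smooth hφ.c1 a b hh).trans ?_
  have hle := sqr_le ha hb ha1 hb1
  have hpos : ∀ᵐ p ∂(volume.restrict (sqr a b h)), 0 < p.1 ∧ 0 < p.2 := by
    filter_upwards [ae_restrict_mem (sqr_meas a b h)] with p hp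
    exact ⟨ha.trans_lt hp.1.1, hb.trans_lt hp.2.1⟩
  have rI : (volume.restrict (Ioc a (a + h))).real univ = h := by simp [hh.le]
  have rJ : (volume.restrict (Ioc b (b + h))).real univ = h := by simp [hh.le]
  have c1 : 0 < 1 - 2 * α₁ := by linarith [h1.2]
  have c2 : 0 < 1 - 2 * α₂ := by linarith [h2.2]
  have B : (∫ p in sqr a b h, |pdx φ p|) ^ 2 ≤ (h * (1 / (1 - 2 * α₁))) *
      ∫ p in sqr a b h, (p.2 ^ α₁ * pdx φ p) ^ 2 := by
    obtain ⟨i, hi⟩ := wint_sub h1 hb hb1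
    refine cs_step (w := fun p => p.2 ^ (-α₁)) (w' := fun p => p.2 ^ α₁) ?_ ?_ ?_ ?_ ?_
      ((hφ.mx h1.1).mono_measure hle)
    · exact (measurable_snd.pow_const _).aestronglyMeasurable
    · rw [sqr_restrict]
      exact Integrable.comp_snd i _
    · rw [sqr_restrict, integral_fun_snd (fun t : ℝ => (t ^ (-α₁)) ^ 2), rI, smul_eq_mul]
      exact mul_le_mul_of_nonneg_left hi hh.le
    · filter_upwards [hpos] with p hp
      rw [← Real.rpow_add hp.2]; simp
    · filter_upwards [hpos] with p hp
      exact Real.rpow_nonneg hp.2.le _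
  have A : (∫ p in sqr a b h, |pdy φ p|) ^ 2 ≤ (h * (1 / (1 - 2 * α₂))) *
      ∫ p in sqr a b h, (p.1 ^ α₂ * pdy φ p) ^ 2 := by
    obtain ⟨i, hi⟩ := wint_sub h2 ha ha1
    refine cs_step (w := fun p => p.1 ^ (-α₂)) (w' := fun p => p.1 ^ α₂) ?_ ?_ ?_ ?_ ?_
      ((hφ.my h2.1).mono_measure hle)
    · exact (measurable_fst.pow_const _).aestronglyMeasurable
    · rw [sqr_restrict]
      exact Integrable.comp_fst i _
    · rw [sqr_restrict, integral_fun_fst (fun t : ℝ => (t ^ (-α₂)) ^ 2), rJ, smul_eq_mul]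
      exact mul_le_mul_of_nonneg_left hi hh.le
    · filter_upwards [hpos] with p hp
      rw [← Real.rpow_add hp.1]; simp
    · filter_upwards [hpos] with p hp
      exact Real.rpow_nonneg hp.1.le _
  have n1 : 0 ≤ ∫ p in sqr a b h, (p.2 ^ α₁ * pdx φ p) ^ 2 := N2_nonneg _
  have n2 : 0 ≤ ∫ p in sqr a b h, (p.1 ^ α₂ * pdy φ p) ^ 2 := N2_nonneg _
  have d1 : 0 < 1 / (1 - 2 * α₁) := by positivity
  have d2 : 0 < 1 / (1 - 2 * α₂) := by positivity
  have hk : kap α₁ α₂ = 2 * (1 / (1 - 2 * α₁)) + 2 * (1 / (1 - 2 * α₂)) := by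
    unfold kap; ring
  rw [hk]
  generalize (∫ p in sqr a b h, (p.2 ^ α₁ * pdx φ p) ^ 2) = P at *
  generalize (∫ p in sqr a b h, (p.1 ^ α₂ * pdy φ p) ^ 2) = Q at *
  generalize (∫ p in sqr a b h, |pdx φ p|) = S at *
  generalize (∫ p in sqr a b h, |pdy φ p|) = R at *
  generalize 1 / (1 - 2 * α₁) = k1 at *
  generalize 1 / (1 - 2 * α₂) = k2 at *
  have : (S + R) ^ 2 ≤ 2 * S ^ 2 + 2 * R ^ 2 := by nlinarith [sq_nonneg (S - R)]
  have m1 : 0 ≤ h * k1 * Q := by positivity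
  have m2 : 0 ≤ h * k2 * P := by positivity
  nlinarith

lemma N2_restrict_le {μ ν : Measure (ℝ × ℝ)} (hle : μ ≤ ν) {f : ℝ × ℝ → ℝ} (hf : MemLp f 2 ν) :
    ∫ p, f p ^ 2 ∂μ ≤ ∫ p, f p ^ 2 ∂ν :=
  integral_mono_measure hle (ae_of_all _ fun _ => sq_nonneg _) hf.integrable_sq

lemma N2_tend_restrict {μ ν : Measure (ℝ × ℝ)} (hle : μ ≤ ν) {f : ℝ × ℝ → ℝ}
    {fn : ℕ → ℝ × ℝ → ℝ} (hf : MemLp f 2 ν) (hfn : ∀ n, MemLp (fn n) 2 ν)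
    (h1 : Tendsto (fun n => ∫ x, (fn n x - f x) ^ 2 ∂ν) atTop (𝓝 0)) :
    Tendsto (fun n => ∫ x, (fn n x - f x) ^ 2 ∂μ) atTop (𝓝 0) :=
  squeeze_zero (fun _ => N2_nonneg _) (fun n => N2_restrict_le hle ((hfn n).sub hf)) h1

lemma poincare_Cl {α₁ α₂ : ℝ} (h1 : α₁ ∈ Ioo (0:ℝ) (1/2)) (h2 : α₂ ∈ Ioo (0:ℝ) (1/2))
    {u X Y : ℝ × ℝ → ℝ} (hu : Cl α₁ α₂ u X Y) {a b h : ℝ} (hh : 0 < h)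
    (ha : 0 ≤ a) (hb : 0 ≤ b) (ha1 : a + h ≤ 1) (hb1 : b + h ≤ 1) :
    ∫ p in sqr a b h, u p ^ 2 ≤
      h * kap α₁ α₂ * ((∫ p in sqr a b h, X p ^ 2) + ∫ p in sqr a b h, Y p ^ 2) +
      (∫ p in sqr a b h, u p) ^ 2 / h ^ 2 := by
  have hle := sqr_le ha hb ha1 hb1
  obtain ⟨φ, ht, t0, tx, ty⟩ := hu.seq
  obtain ⟨mu, mX, mY, -⟩ := hu
  have fin : IsFiniteMeasure (volume.restrict (sqr a b h)) :=
    isFiniteMeasure_of_le _ hle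
  have s0 := N2_tend_restrict hle mu (fun n => (ht n).m0) t0
  have sx := N2_tend_restrict hle mX (fun n => (ht n).mx h1.1) tx
  have sy := N2_tend_restrict hle mY (fun n => (ht n).my h2.1) ty
  have q0 := L2_tendsto_sq (mu.mono_measure hle) (fun n => ((ht n).m0).mono_measure hle) s0
  have qx := L2_tendsto_sq (mX.mono_measure hle) (fun n => ((ht n).mx h1.1).mono_measure hle) sx
  have qy := L2_tendsto_sq (mY.mono_measure hle) (fun n => ((ht n).my h2.1).mono_measure hle) sy
  have c1 : MemLp (fun _ : ℝ × ℝ => (1:ℝ)) 2 (volume.restrict (sqr a b h)) := memLp_const 1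
  have q1 := L2_tendsto_mul (mu.mono_measure hle) c1 (fun n => ((ht n).m0).mono_measure hle)
    (fun _ => c1) s0 (by simp)
  simp only [mul_one] at q1
  exact le_of_tendsto_of_tendsto' q0
    (((qx.add qy).const_mul (h * kap α₁ α₂)).add ((q1.pow 2).div_const (h ^ 2)))
    fun n => poincare_test h1 h2 (ht n) hh ha hb ha1 hb1

lemma cells_cover (N : ℕ) (hN : 0 < N) :
    (⋃ ij ∈ Finset.range N ×ˢ Finset.range N,
      sqr ((ij.1 : ℝ) / N) ((ij.2 : ℝ) / N) (1 / (N : ℝ))) = Ioc (0:ℝ) 1 ×ˢ Ioc (0:ℝ) 1 := by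
  have hN' : (0:ℝ) < N := by exact_mod_cast hN
  have one : ∀ x ∈ Ioc (0:ℝ) 1, ∃ i < N, x ∈ Ioc ((i : ℝ) / N) ((i : ℝ) / N + 1 / N) := by
    intro x hx
    have hp : 0 < ⌈x * N⌉₊ := Nat.ceil_pos.2 (mul_pos hx.1 hN')
    obtain ⟨i, hi⟩ : ∃ i, ⌈x * N⌉₊ = i + 1 := ⟨_, (Nat.sub_add_cancel hp).symm⟩
    have h1 : x * N ≤ (i : ℝ) + 1 := by
      have := Nat.le_ceil (x * N); rw [hi] at this; exact_mod_cast this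
    have h2 : (i : ℝ) < x * N := by
      have : i < ⌈x * N⌉₊ := by omega
      exact Nat.lt_ceil.1 this
    have h3 : (i : ℝ) < N := h2.trans_le (by nlinarith [hx.2])
    refine ⟨i, by exact_mod_cast h3, ?_, ?_⟩
    · rwa [div_lt_iff₀ hN']
    · rw [← add_div, le_div_iff₀ hN']; exact h1
  have two : ∀ i < N, Ioc ((i : ℝ) / N) ((i : ℝ) / N + 1 / N) ⊆ Ioc (0:ℝ) 1 := by
    intro i hi
    refine Ioc_subset_Ioc (by positivity) ?_
    rw [← add_div, div_le_one hN']; exact_mod_cast hi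
  ext ⟨x, y⟩
  simp only [mem_iUnion, Finset.mem_product, Finset.mem_range, sqr, exists_prop, Prod.exists]
  constructor
  · rintro ⟨i, j, ⟨hi, hj⟩, hx, hy⟩
    exact ⟨two i hi hx, two j hj hy⟩
  · rintro ⟨hx, hy⟩
    obtain ⟨i, hi, hx⟩ := one x hx
    obtain ⟨j, hj, hy⟩ := one y hy
    exact ⟨i, j, ⟨hi, hj⟩, hx, hy⟩

lemma cells_disj1 {N : ℕ} (hN : 0 < N) {i j : ℕ} {x : ℝ}
    (hi : x ∈ Ioc ((i : ℝ) / N) ((i : ℝ) / N + 1 / N))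
    (hj : x ∈ Ioc ((j : ℝ) / N) ((j : ℝ) / N + 1 / N)) : i = j := by
  have hN' : (0:ℝ) < N := by exact_mod_cast hN
  have key : ∀ i j : ℕ, x ∈ Ioc ((i : ℝ) / N) ((i : ℝ) / N + 1 / N) →
      x ∈ Ioc ((j : ℝ) / N) ((j : ℝ) / N + 1 / N) → i ≤ j := by
    intro i j hi hj
    have := hi.1.trans_le hj.2
    rw [← add_div, div_lt_div_iff_of_pos_right hN'] at this
    have : i < j + 1 := by exact_mod_cast this
    omega
  exact le_antisymm (key i j hi hj) (key j i hj hi)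

lemma cells_sum {f : ℝ × ℝ → ℝ} (hf : Integrable f muO) (N : ℕ) (hN : 0 < N) :
    ∫ p, f p ∂muO = ∑ ij ∈ Finset.range N ×ˢ Finset.range N,
      ∫ p in sqr ((ij.1 : ℝ) / N) ((ij.2 : ℝ) / N) (1 / (N : ℝ)), f p := by
  rw [muO_eq, ← cells_cover N hN] at *
  refine integral_biUnion_finset _ (fun _ _ => sqr_meas _ _ _) ?_ ?_
  · rintro ⟨i, j⟩ - ⟨i', j'⟩ - hne
    rw [Function.onFun, Set.disjoint_left]
    rintro ⟨x, y⟩ ⟨hx, hy⟩ ⟨hx', hy'⟩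
    exact hne (Prod.ext (cells_disj1 hN hx hx') (cells_disj1 hN hy hy'))
  · intro ij hij
    exact IntegrableOn.mono_set hf (subset_biUnion_of_mem (u := fun ij : ℕ × ℕ =>
      sqr ((ij.1 : ℝ) / N) ((ij.2 : ℝ) / N) (1 / (N : ℝ))) hij)

/-- Cell functional. -/
def cellInt (N : ℕ) (ij : ℕ × ℕ) (u : ℝ × ℝ → ℝ) : ℝ :=
  ∫ p in sqr ((ij.1 : ℝ) / N) ((ij.2 : ℝ) / N) (1 / (N : ℝ)), u p

lemma cell_in {N : ℕ} (hN : 0 < N) {i : ℕ} (hi : i < N) : (i : ℝ) / N + 1 / N ≤ 1 := by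
  have hN' : (0:ℝ) < N := by exact_mod_cast hN
  rw [← add_div, div_le_one hN']; exact_mod_cast hi

lemma poincare_global {α₁ α₂ : ℝ} (h1 : α₁ ∈ Ioo (0:ℝ) (1/2)) (h2 : α₂ ∈ Ioo (0:ℝ) (1/2))
    {u X Y : ℝ × ℝ → ℝ} (hu : Cl α₁ α₂ u X Y) (N : ℕ) (hN : 0 < N) :
    ∫ p, u p ^ 2 ∂muO ≤ kap α₁ α₂ / N * ((∫ p, X p ^ 2 ∂muO) + ∫ p, Y p ^ 2 ∂muO) +
      (N : ℝ) ^ 2 * ∑ ij ∈ Finset.range N ×ˢ Finset.range N, (cellInt N ij u) ^ 2 := by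
  have hN' : (0:ℝ) < N := by exact_mod_cast hN
  rw [cells_sum hu.1.integrable_sq N hN, cells_sum hu.2.1.integrable_sq N hN,
    cells_sum hu.2.2.1.integrable_sq N hN, ← Finset.sum_add_distrib, Finset.mul_sum,
    Finset.mul_sum, ← Finset.sum_add_distrib]
  refine Finset.sum_le_sum fun ij hij => ?_
  simp only [Finset.mem_product, Finset.mem_range] at hij
  refine (poincare_Cl h1 h2 hu (h := 1 / (N : ℝ)) (by positivity) (by positivity) (by positivity)
    (cell_in hN hij.1) (cell_in hN hij.2)).trans (le_of_eq ?_)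
  unfold cellInt
  field_simp

lemma IsTest.add {φ ψ : ℝ × ℝ → ℝ} (h : IsTest φ) (h' : IsTest ψ) :
    IsTest (fun p => φ p + ψ p) :=
  ⟨h.1.add h'.1, h.2.1.add h'.2.1, (tsupport_add φ ψ).trans (union_subset h.2.2 h'.2.2)⟩

lemma IsTest.smul {φ : ℝ × ℝ → ℝ} (h : IsTest φ) (c : ℝ) : IsTest (fun p => c * φ p) :=
  ⟨contDiff_const.mul h.1, h.2.1.mul_left, (tsupport_mul_subset_right).trans h.2.2⟩

lemma IsTest.diff {φ : ℝ × ℝ → ℝ} (h : IsTest φ) (p : ℝ × ℝ) : DifferentiableAt ℝ φ p :=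
  h.c1.differentiable (by norm_num) p

lemma Cl.add {α₁ α₂ : ℝ} (h1 : 0 < α₁) (h2 : 0 < α₂) {u X Y u' X' Y' : ℝ × ℝ → ℝ}
    (h : Cl α₁ α₂ u X Y) (h' : Cl α₁ α₂ u' X' Y') :
    Cl α₁ α₂ (fun p => u p + u' p) (fun p => X p + X' p) (fun p => Y p + Y' p) := by
  obtain ⟨m0, mX, mY, hc⟩ := h
  obtain ⟨m0', mX', mY', hc'⟩ := h'
  refine ⟨m0.add m0', mX.add mX', mY.add mY', fun ε hε => ?_⟩
  obtain ⟨φ, t, a0, ax, ay⟩ := hc (ε / 4) (by positivity)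
  obtain ⟨ψ, t', a0', ax', ay'⟩ := hc' (ε / 4) (by positivity)
  refine ⟨_, t.add t', ?_, ?_, ?_⟩
  · have := N2_add_le (t.m0.sub m0) (t'.m0.sub m0')
    simp only [Pi.sub_apply] at this
    have e : ∀ p, (φ p + ψ p - (u p + u' p)) = φ p - u p + (ψ p - u' p) := fun p => by ring
    simp only [e]; linarith
  · have := N2_add_le ((t.mx h1).sub mX) ((t'.mx h1).sub mX')
    simp only [Pi.sub_apply] at this
    have e : ∀ p, (p.2 ^ α₁ * pdx (fun p => φ p + ψ p) p - (X p + X' p)) =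
        p.2 ^ α₁ * pdx φ p - X p + (p.2 ^ α₁ * pdx ψ p - X' p) := fun p => by
      unfold pdx
      rw [fderiv_fun_add (t.diff p) (t'.diff p), ContinuousLinearMap.add_apply]; ring
    simp only [e]; linarith
  · have := N2_add_le ((t.my h2).sub mY) ((t'.my h2).sub mY')
    simp only [Pi.sub_apply] at this
    have e : ∀ p, (p.1 ^ α₂ * pdy (fun p => φ p + ψ p) p - (Y p + Y' p)) =
        p.1 ^ α₂ * pdy φ p - Y p + (p.1 ^ α₂ * pdy ψ p - Y' p) := fun p => by
      unfold pdy
      rw [fderiv_fun_add (t.diff p) (t'.diff p), ContinuousLinearMap.add_apply]; ring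
    simp only [e]; linarith

lemma Cl.smul {α₁ α₂ : ℝ} (c : ℝ) {u X Y : ℝ × ℝ → ℝ}
    (h : Cl α₁ α₂ u X Y) :
    Cl α₁ α₂ (fun p => c * u p) (fun p => c * X p) (fun p => c * Y p) := by
  obtain ⟨m0, mX, mY, hc⟩ := h
  refine ⟨m0.const_mul c, mX.const_mul c, mY.const_mul c, fun ε hε => ?_⟩
  obtain ⟨φ, t, a0, ax, ay⟩ := hc (ε / (c ^ 2 + 1)) (by positivity)
  have key : ∀ r : ℝ, 0 ≤ r → r < ε / (c ^ 2 + 1) → c ^ 2 * r < ε := by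
    intro r h0 hr
    rw [lt_div_iff₀ (by positivity)] at hr
    nlinarith
  refine ⟨_, t.smul c, ?_, ?_, ?_⟩
  · have e : ∀ p, (c * φ p - c * u p) ^ 2 = c ^ 2 * (φ p - u p) ^ 2 := fun p => by ring
    simp only [e, integral_const_mul]
    exact key _ (N2_nonneg _) a0
  · have e : ∀ p : ℝ × ℝ, (p.2 ^ α₁ * pdx (fun p => c * φ p) p - c * X p) ^ 2 =
        c ^ 2 * (p.2 ^ α₁ * pdx φ p - X p) ^ 2 := fun p => by
      unfold pdx
      rw [fderiv_const_mul (t.diff p), ContinuousLinearMap.smul_apply, smul_eq_mul]; ring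
    simp only [e, integral_const_mul]
    exact key _ (N2_nonneg _) ax
  · have e : ∀ p : ℝ × ℝ, (p.1 ^ α₂ * pdy (fun p => c * φ p) p - c * Y p) ^ 2 =
        c ^ 2 * (p.1 ^ α₂ * pdy φ p - Y p) ^ 2 := fun p => by
      unfold pdy
      rw [fderiv_const_mul (t.diff p), ContinuousLinearMap.smul_apply, smul_eq_mul]; ring
    simp only [e, integral_const_mul]
    exact key _ (N2_nonneg _) ay

lemma Cl.sub {α₁ α₂ : ℝ} (h1 : 0 < α₁) (h2 : 0 < α₂) {u X Y u' X' Y' : ℝ × ℝ → ℝ}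
    (h : Cl α₁ α₂ u X Y) (h' : Cl α₁ α₂ u' X' Y') :
    Cl α₁ α₂ (fun p => u p - u' p) (fun p => X p - X' p) (fun p => Y p - Y' p) := by
  have := h.add h1 h2 (h'.smul (-1))
  simpa [← sub_eq_add_neg] using this

lemma Cl.closed {α₁ α₂ : ℝ} (h1 : 0 < α₁) (h2 : 0 < α₂) {u X Y : ℝ × ℝ → ℝ}
    {un Xn Yn : ℕ → ℝ × ℝ → ℝ} (h : ∀ n, Cl α₁ α₂ (un n) (Xn n) (Yn n))
    (mu : MemLp u 2 muO) (mX : MemLp X 2 muO) (mY : MemLp Y 2 muO)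
    (t0 : Tendsto (fun n => ∫ p, (un n p - u p) ^ 2 ∂muO) atTop (𝓝 0))
    (tx : Tendsto (fun n => ∫ p, (Xn n p - X p) ^ 2 ∂muO) atTop (𝓝 0))
    (ty : Tendsto (fun n => ∫ p, (Yn n p - Y p) ^ 2 ∂muO) atTop (𝓝 0)) :
    Cl α₁ α₂ u X Y := by
  refine ⟨mu, mX, mY, fun ε hε => ?_⟩
  have e4 : 0 < ε / 4 := by positivity
  obtain ⟨n, b0, bx, by'⟩ := ((t0.eventually (gt_mem_nhds e4)).and
    ((tx.eventually (gt_mem_nhds e4)).and (ty.eventually (gt_mem_nhds e4)))).exists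
  obtain ⟨m0, mXn, mYn, hc⟩ := h n
  obtain ⟨φ, t, a0, ax, ay⟩ := hc (ε / 4) e4
  have gen : ∀ f g k : ℝ × ℝ → ℝ, MemLp f 2 muO → MemLp g 2 muO → MemLp k 2 muO →
      ∫ p, (f p - g p) ^ 2 ∂muO < ε / 4 → ∫ p, (g p - k p) ^ 2 ∂muO < ε / 4 →
      ∫ p, (f p - k p) ^ 2 ∂muO < ε := by
    intro f g k hf hg hk i j
    have := N2_add_le (hf.sub hg) (hg.sub hk)
    simp only [Pi.sub_apply, sub_add_sub_cancel] at this
    linarith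
  exact ⟨φ, t, gen _ _ _ t.m0 m0 mu a0 b0, gen _ _ _ (t.mx h1) mXn mX ax bx,
    gen _ _ _ (t.my h2) mYn mY ay by'⟩

lemma cellInt_bound {u : ℝ × ℝ → ℝ} (hu : MemLp u 2 muO) {N : ℕ} {ij : ℕ × ℕ}
    (hi : ij.1 < N) (hj : ij.2 < N) :
    (cellInt N ij u) ^ 2 ≤ (∫ p, u p ^ 2 ∂muO) * ∫ _p, (1:ℝ) ^ 2 ∂muO := by
  have hN : 0 < N := by omega
  have hle := sqr_le (a := (ij.1 : ℝ) / N) (b := (ij.2 : ℝ) / N) (h := 1 / (N : ℝ)) (by positivity) (by positivity)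
    (cell_in hN hi) (cell_in hN hj)
  have fin : IsFiniteMeasure (volume.restrict
    (sqr ((ij.1 : ℝ) / N) ((ij.2 : ℝ) / N) (1 / (N : ℝ)))) := isFiniteMeasure_of_le _ hle
  have c1 : MemLp (fun _ : ℝ × ℝ => (1:ℝ)) 2 (volume.restrict
    (sqr ((ij.1 : ℝ) / N) ((ij.2 : ℝ) / N) (1 / (N : ℝ)))) := memLp_const 1
  have := L2_CS (hu.mono_measure hle) c1
  simp only [mul_one] at this
  refine this.trans ?_
  exact mul_le_mul (N2_restrict_le hle hu) (N2_restrict_le hle (memLp_const 1)) (N2_nonneg _)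
    (N2_nonneg _)

lemma cellInt_sub {u v : ℝ × ℝ → ℝ} (hu : MemLp u 2 muO) (hv : MemLp v 2 muO) {N : ℕ} {ij : ℕ × ℕ}
    (hi : ij.1 < N) (hj : ij.2 < N) :
    cellInt N ij (fun p => u p - v p) = cellInt N ij u - cellInt N ij v := by
  have hN : 0 < N := by omega
  have hle := sqr_le (a := (ij.1 : ℝ) / N) (b := (ij.2 : ℝ) / N) (h := 1 / (N : ℝ)) (by positivity) (by positivity)
    (cell_in hN hi) (cell_in hN hj)
  have iu : Integrable u muO := hu.integrable (by norm_num)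
  have iv : Integrable v muO := hv.integrable (by norm_num)
  exact integral_sub (iu.mono_measure hle) (iv.mono_measure hle)

/-- Compactness: bounded sequences have an `L²`-Cauchy subsequence. -/
lemma Cl_compact {α₁ α₂ : ℝ} (h1 : α₁ ∈ Ioo (0:ℝ) (1/2)) (h2 : α₂ ∈ Ioo (0:ℝ) (1/2))
    {un Xn Yn : ℕ → ℝ × ℝ → ℝ} (h : ∀ n, Cl α₁ α₂ (un n) (Xn n) (Yn n)) {R : ℝ}
    (b0 : ∀ n, ∫ p, un n p ^ 2 ∂muO ≤ R) (bx : ∀ n, ∫ p, Xn n p ^ 2 ∂muO ≤ R)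
    (bY : ∀ n, ∫ p, Yn n p ^ 2 ∂muO ≤ R) :
    ∃ ns : ℕ → ℕ, StrictMono ns ∧ ∀ ε > 0, ∃ K, ∀ m ≥ K, ∀ n ≥ K,
      ∫ p, (un (ns m) p - un (ns n) p) ^ 2 ∂muO < ε := by
  have hR : 0 ≤ R := (N2_nonneg _).trans (b0 0)
  set C : ℝ := √(R * ∫ _p, (1:ℝ) ^ 2 ∂muO) with hC
  set ℓ : ℕ → (ℕ × ℕ × ℕ) → ℝ := fun n k =>
    if k.2.1 < k.1 ∧ k.2.2 < k.1 then cellInt k.1 k.2 (un n) else 0 with hℓ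
  have hmem : ∀ n, ℓ n ∈ Set.pi univ (fun _ : ℕ × ℕ × ℕ => Icc (-C) C) := by
    intro n k _
    show ℓ n k ∈ Icc (-C) C
    rw [mem_Icc, ← abs_le]
    simp only [hℓ]
    split_ifs with hk
    · refine Real.abs_le_sqrt ((cellInt_bound (h n).1 hk.1 hk.2).trans ?_)
      exact mul_le_mul_of_nonneg_right (b0 n) (N2_nonneg _)
    · rw [abs_zero]; exact Real.sqrt_nonneg _
  obtain ⟨L, -, ns, hns, hL⟩ := (isCompact_univ_pi
    (fun _ : ℕ × ℕ × ℕ => isCompact_Icc (a := -C) (b := C))).tendsto_subseq hmem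
  refine ⟨ns, hns, fun ε hε => ?_⟩
  have hk : 0 ≤ kap α₁ α₂ := by
    have : 0 < 1 - 2 * α₁ := by linarith [h1.2]
    have : 0 < 1 - 2 * α₂ := by linarith [h2.2]
    unfold kap; positivity
  obtain ⟨N, hN⟩ := exists_nat_gt (kap α₁ α₂ * (8 * R) / (ε / 2))
  have hN' : (0:ℝ) < N := lt_of_le_of_lt (by positivity) hN
  have hN0 : 0 < N := by exact_mod_cast hN'
  have hsum : Tendsto (fun mn : ℕ × ℕ => (N : ℝ) ^ 2 * ∑ ij ∈ Finset.range N ×ˢ Finset.range N,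
      (ℓ (ns mn.1) (N, ij) - ℓ (ns mn.2) (N, ij)) ^ 2) atTop (𝓝 0) := by
    have : ∀ ij : ℕ × ℕ, Tendsto (fun mn : ℕ × ℕ =>
        (ℓ (ns mn.1) (N, ij) - ℓ (ns mn.2) (N, ij)) ^ 2) atTop (𝓝 0) := by
      intro ij
      have hl := (tendsto_pi_nhds.1 hL) (N, ij)
      rw [← prod_atTop_atTop_eq]
      have := ((hl.comp (tendsto_fst (f := atTop) (g := (atTop : Filter ℕ)))).sub
        (hl.comp (tendsto_snd (f := (atTop : Filter ℕ)) (g := atTop)))).pow 2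
      simpa using this
    have := (tendsto_finsetSum (Finset.range N ×ˢ Finset.range N) (fun ij _ => this ij)).const_mul
      ((N : ℝ) ^ 2)
    simpa using this
  obtain ⟨⟨K1, K2⟩, hK⟩ := eventually_atTop.1 (hsum.eventually (gt_mem_nhds (half_pos hε)))
  refine ⟨max K1 K2, fun m hm n hn => ?_⟩
  have hs := hK (m, n) ⟨(le_max_left _ _).trans hm, (le_max_right _ _).trans hn⟩
  have hcl := (h (ns m)).sub h1.1 h2.1 (h (ns n))
  refine (poincare_global h1 h2 hcl N hN0).trans_lt ?_
  have e1 : ∑ ij ∈ Finset.range N ×ˢ Finset.range N,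
      (cellInt N ij (fun p => un (ns m) p - un (ns n) p)) ^ 2 =
      ∑ ij ∈ Finset.range N ×ˢ Finset.range N,
      (ℓ (ns m) (N, ij) - ℓ (ns n) (N, ij)) ^ 2 := by
    refine Finset.sum_congr rfl fun ij hij => ?_
    simp only [Finset.mem_product, Finset.mem_range] at hij
    simp only [hℓ, hij, and_self, if_true]
    rw [cellInt_sub (h _).1 (h _).1 hij.1 hij.2]
  rw [e1]
  have gen : ∀ f g : ℝ × ℝ → ℝ, MemLp f 2 muO → MemLp g 2 muO → ∫ p, f p ^ 2 ∂muO ≤ R →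
      ∫ p, g p ^ 2 ∂muO ≤ R → ∫ p, (f p - g p) ^ 2 ∂muO ≤ 4 * R := by
    intro f g hf hg i j
    have := N2_add_le hf hg.neg
    simp only [Pi.neg_apply, ← sub_eq_add_neg, neg_sq] at this
    linarith
  have gx := gen _ _ (h (ns m)).2.1 (h (ns n)).2.1 (bx _) (bx _)
  have gy := gen _ _ (h (ns m)).2.2.1 (h (ns n)).2.2.1 (bY _) (bY _)
  have : kap α₁ α₂ / N * ((∫ p, (Xn (ns m) p - Xn (ns n) p) ^ 2 ∂muO) +
      ∫ p, (Yn (ns m) p - Yn (ns n) p) ^ 2 ∂muO) ≤ ε / 2 := by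
    calc _ ≤ kap α₁ α₂ / N * (8 * R) := by gcongr; linarith
      _ ≤ ε / 2 := by
        rw [div_lt_iff₀ (half_pos hε)] at hN
        rw [div_mul_eq_mul_div, div_le_iff₀ hN']; linarith
  linarith

/-- Triples of functions. -/
abbrev Tr := (ℝ × ℝ → ℝ) × (ℝ × ℝ → ℝ) × (ℝ × ℝ → ℝ)

lemma test_zero : IsTest (fun _ => 0) := by
  refine ⟨contDiff_const, HasCompactSupport.zero, ?_⟩
  have : tsupport (fun _ : ℝ × ℝ => (0:ℝ)) = ∅ := tsupport_eq_empty_iff.2 rfl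
  rw [this]; exact empty_subset _

lemma Cl_test {α₁ α₂ : ℝ} (h1 : 0 < α₁) (h2 : 0 < α₂) {φ : ℝ × ℝ → ℝ} (h : IsTest φ) :
    Cl α₁ α₂ φ (fun p => p.2 ^ α₁ * pdx φ p) (fun p => p.1 ^ α₂ * pdy φ p) :=
  ⟨h.m0, h.mx h1, h.my h2, fun ε hε => ⟨φ, h, by simpa, by simpa, by simpa⟩⟩

/-- The energy space as a submodule of triples. -/
def HS (α₁ α₂ : ℝ) (h1 : 0 < α₁) (h2 : 0 < α₂) (S : ℝ × ℝ → ℝ) : Submodule ℝ Tr where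
  carrier := {w | Cl α₁ α₂ w.1 w.2.1 w.2.2 ∧ MemLp (fun p => S p * w.1 p) 2 muO}
  add_mem' := by
    rintro w w' ⟨h, g⟩ ⟨h', g'⟩
    refine ⟨h.add h1 h2 h', ?_⟩
    have : (fun p => S p * (w + w').1 p) = fun p => S p * w.1 p + S p * w'.1 p := by
      ext p; simp [mul_add]
    rw [this]; exact g.add g'
  zero_mem' := by
    refine ⟨?_, ?_⟩
    · have h := (Cl_test h1 h2 test_zero).smul 0
      simp only [mul_zero, zero_mul] at h
      exact h
    · simp
  smul_mem' := by
    rintro c w ⟨h, g⟩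
    refine ⟨h.smul c, ?_⟩
    have : (fun p => S p * (c • w).1 p) = fun p => c * (S p * w.1 p) := by
      ext p; simp; ring
    rw [this]; exact g.const_mul c

section forms
variable {α₁ α₂ : ℝ} {h1 : 0 < α₁} {h2 : 0 < α₂} {S : ℝ × ℝ → ℝ}

lemma Subtype.cl (w : HS α₁ α₂ h1 h2 S) : Cl α₁ α₂ w.1.1 w.1.2.1 w.1.2.2 := w.2.1
lemma Subtype.m0 (w : HS α₁ α₂ h1 h2 S) : MemLp w.1.1 2 muO := w.2.1.1
lemma Subtype.mx (w : HS α₁ α₂ h1 h2 S) : MemLp w.1.2.1 2 muO := w.2.1.2.1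
lemma Subtype.my (w : HS α₁ α₂ h1 h2 S) : MemLp w.1.2.2 2 muO := w.2.1.2.2.1
lemma Subtype.ms (w : HS α₁ α₂ h1 h2 S) : MemLp (fun p => S p * w.1.1 p) 2 muO := w.2.2

lemma bil_add {f f' g : ℝ × ℝ → ℝ} (hf : MemLp f 2 muO) (hf' : MemLp f' 2 muO)
    (hg : MemLp g 2 muO) : ∫ p, (f p + f' p) * g p ∂muO =
      (∫ p, f p * g p ∂muO) + ∫ p, f' p * g p ∂muO := by
  rw [← integral_add (L2_mul hf hg) (L2_mul hf' hg)]
  congr 1; ext p; ring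

/-- `L²` form. -/
def fB (w v : HS α₁ α₂ h1 h2 S) : ℝ := ∫ p, w.1.1 p * v.1.1 p ∂muO

/-- Energy form. -/
def fA (w v : HS α₁ α₂ h1 h2 S) : ℝ := (∫ p, w.1.2.1 p * v.1.2.1 p ∂muO) +
  (∫ p, w.1.2.2 p * v.1.2.2 p ∂muO) + ∫ p, (S p * w.1.1 p) * (S p * v.1.1 p) ∂muO

lemma fB_comm (w v : HS α₁ α₂ h1 h2 S) : fB w v = fB v w := by
  unfold fB; simp only [mul_comm]

lemma fA_comm (w v : HS α₁ α₂ h1 h2 S) : fA w v = fA v w := by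
  unfold fA
  congr 1
  · congr 1 <;> · congr 1; ext p; ring
  · congr 1; ext p; ring

lemma fB_add (w w' v : HS α₁ α₂ h1 h2 S) : fB (w + w') v = fB w v + fB w' v :=
  bil_add w.m0 w'.m0 v.m0

lemma fA_add (w w' v : HS α₁ α₂ h1 h2 S) : fA (w + w') v = fA w v + fA w' v := by
  have e1 := bil_add w.mx w'.mx v.mx
  have e2 := bil_add w.my w'.my v.my
  have e3 := bil_add w.ms w'.ms v.ms
  simp only [← mul_add] at e3
  unfold fA
  have : fA (w + w') v = (∫ p, (w.1.2.1 p + w'.1.2.1 p) * v.1.2.1 p ∂muO) +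
    (∫ p, (w.1.2.2 p + w'.1.2.2 p) * v.1.2.2 p ∂muO) +
    ∫ p, (S p * (w.1.1 p + w'.1.1 p)) * (S p * v.1.1 p) ∂muO := rfl
  unfold fA at this
  rw [this, e1, e2, e3]; ring

lemma fB_smul (c : ℝ) (w v : HS α₁ α₂ h1 h2 S) : fB (c • w) v = c * fB w v := by
  unfold fB
  rw [← integral_const_mul]
  congr 1; ext p; simp; ring

lemma fA_smul (c : ℝ) (w v : HS α₁ α₂ h1 h2 S) : fA (c • w) v = c * fA w v := by
  unfold fA
  rw [mul_add, mul_add, ← integral_const_mul, ← integral_const_mul, ← integral_const_mul]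
  congr 1
  · congr 1 <;> · congr 1; ext p; simp; ring
  · congr 1; ext p; simp; ring

lemma fB_self (w : HS α₁ α₂ h1 h2 S) : fB w w = ∫ p, w.1.1 p ^ 2 ∂muO := by
  unfold fB; simp only [sq]

lemma fA_self (w : HS α₁ α₂ h1 h2 S) : fA w w = (∫ p, w.1.2.1 p ^ 2 ∂muO) +
    (∫ p, w.1.2.2 p ^ 2 ∂muO) + ∫ p, (S p * w.1.1 p) ^ 2 ∂muO := by
  unfold fA; simp only [sq]

lemma fB_nonneg (w : HS α₁ α₂ h1 h2 S) : 0 ≤ fB w w := by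
  rw [fB_self]; exact N2_nonneg _

lemma fA_nonneg (w : HS α₁ α₂ h1 h2 S) : 0 ≤ fA w w := by
  rw [fA_self]; exact add_nonneg (add_nonneg (N2_nonneg _) (N2_nonneg _)) (N2_nonneg _)

lemma fA_add_smul (w v : HS α₁ α₂ h1 h2 S) (t : ℝ) :
    fA (w + t • v) (w + t • v) = fA w w + 2 * t * fA w v + t ^ 2 * fA v v := by
  rw [fA_add, fA_smul, fA_comm w, fA_comm v, fA_add, fA_add, fA_smul, fA_smul, fA_comm v w]; ring

lemma fB_add_smul (w v : HS α₁ α₂ h1 h2 S) (t : ℝ) :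
    fB (w + t • v) (w + t • v) = fB w w + 2 * t * fB w v + t ^ 2 * fB v v := by
  rw [fB_add, fB_smul, fB_comm w, fB_comm v, fB_add, fB_add, fB_smul, fB_smul, fB_comm v w]; ring

end forms

/-- Admissible Rayleigh values. -/
def raySet (α₁ α₂ : ℝ) (h1 : 0 < α₁) (h2 : 0 < α₂) (S : ℝ × ℝ → ℝ) : Set ℝ :=
  {r | ∃ w : HS α₁ α₂ h1 h2 S, fB w w = 1 ∧ r = fA w w}

section ray
variable {α₁ α₂ : ℝ} {h1 : 0 < α₁} {h2 : 0 < α₂} {S : ℝ × ℝ → ℝ}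

lemma ray_nonneg : 0 ≤ sInf (raySet α₁ α₂ h1 h2 S) := by
  refine Real.sInf_nonneg ?_
  rintro r ⟨w, -, rfl⟩
  exact fA_nonneg w

lemma ray_le (w : HS α₁ α₂ h1 h2 S) : sInf (raySet α₁ α₂ h1 h2 S) * fB w w ≤ fA w w := by
  rcases (fB_nonneg w).eq_or_lt with h0 | hpos
  · rw [← h0, mul_zero]; exact fA_nonneg w
  have hb : BddBelow (raySet α₁ α₂ h1 h2 S) := ⟨0, by rintro r ⟨w, -, rfl⟩; exact fA_nonneg w⟩
  set c := (√(fB w w))⁻¹ with hc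
  have hc2 : c ^ 2 = (fB w w)⁻¹ := by rw [hc, inv_pow, Real.sq_sqrt hpos.le]
  have sA : fA (c • w) (c • w) = c ^ 2 * fA w w := by
    rw [fA_smul, fA_comm, fA_smul]; ring
  have sB : fB (c • w) (c • w) = c ^ 2 * fB w w := by
    rw [fB_smul, fB_comm, fB_smul]; ring
  have := csInf_le hb ⟨c • w, by rw [sB, hc2, inv_mul_cancel₀ hpos.ne'], rfl⟩
  rw [sA, hc2, inv_mul_eq_div, le_div_iff₀ hpos] at this
  exact this

lemma quad_zero {b c : ℝ} (h : ∀ t : ℝ, 0 ≤ 2 * t * b + t ^ 2 * c) : b = 0 := by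
  by_contra hb
  have h1 := h (-b / (|c| + 1))
  have hc : 0 < |c| + 1 := by positivity
  have e : 2 * (-b / (|c| + 1)) * b + (-b / (|c| + 1)) ^ 2 * c =
      b ^ 2 / (|c| + 1) ^ 2 * (c - 2 * (|c| + 1)) := by field_simp; ring
  rw [e] at h1
  have : 0 < b ^ 2 / (|c| + 1) ^ 2 := by positivity
  have h2 := nonneg_of_mul_nonneg_right h1 this
  linarith [le_abs_self c, abs_nonneg c]

lemma euler_lagrange {w : HS α₁ α₂ h1 h2 S}
    (hw : fA w w ≤ sInf (raySet α₁ α₂ h1 h2 S) * fB w w) (v : HS α₁ α₂ h1 h2 S) :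
    fA w v = sInf (raySet α₁ α₂ h1 h2 S) * fB w v := by
  set l := sInf (raySet α₁ α₂ h1 h2 S)
  have : fA w v - l * fB w v = 0 := by
    refine quad_zero (c := fA v v - l * fB v v) fun t => ?_
    have := ray_le (w + t • v)
    rw [fA_add_smul, fB_add_smul] at this
    linarith
  linarith

lemma minimizer_exists (h1' : α₁ < 1 / 2) (h2' : α₂ < 1 / 2)
    (hne : (raySet α₁ α₂ h1 h2 S).Nonempty) :
    ∃ w : HS α₁ α₂ h1 h2 S, fB w w = 1 ∧ fA w w ≤ sInf (raySet α₁ α₂ h1 h2 S) := by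
  set l := sInf (raySet α₁ α₂ h1 h2 S) with hl
  have hseq : ∀ n : ℕ, ∃ w : HS α₁ α₂ h1 h2 S, fB w w = 1 ∧ fA w w < l + 1 / ((n : ℝ) + 1) := by
    intro n
    obtain ⟨r, ⟨w, hw, rfl⟩, hr⟩ := exists_lt_of_csInf_lt hne
      (lt_add_of_pos_right l (by positivity : 0 < 1 / ((n : ℝ) + 1)))
    exact ⟨w, hw, hr⟩
  choose w hB hA using hseq
  have hbd : ∀ n, fA (w n) (w n) ≤ l + 1 := fun n => (hA n).le.trans (by
    gcongr; rw [div_le_one (by positivity)]; linarith [(Nat.cast_nonneg n : (0:ℝ) ≤ n)])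
  have hparts : ∀ n, ∫ p, (w n).1.2.1 p ^ 2 ∂muO ≤ l + 1 ∧ ∫ p, (w n).1.2.2 p ^ 2 ∂muO ≤ l + 1 := by
    intro n
    have := hbd n
    rw [fA_self] at this
    have a := N2_nonneg (μ := muO) (w n).1.2.1
    have b := N2_nonneg (μ := muO) (w n).1.2.2
    have c := N2_nonneg (μ := muO) (fun p => S p * (w n).1.1 p)
    constructor <;> linarith
  have hl0 : 0 ≤ l := ray_nonneg
  obtain ⟨ns, hns, hcau⟩ := Cl_compact ⟨h1, h1'⟩ ⟨h2, h2'⟩ (fun n => (w n).cl) (R := l + 1)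
    (fun n => by rw [← fB_self, hB n]; linarith) (fun n => (hparts n).1) (fun n => (hparts n).2)
  -- the energy is Cauchy
  have hA' : ∀ n, fA (w (ns n)) (w (ns n)) < l + 1 / ((n : ℝ) + 1) := fun n =>
    (hA _).trans_le (by
      gcongr
      exact hns.id_le n)
  have hpar : ∀ m n, fA (w (ns m) + (-1 : ℝ) • w (ns n)) (w (ns m) + (-1 : ℝ) • w (ns n)) ≤
      2 * (1 / ((m : ℝ) + 1)) + 2 * (1 / ((n : ℝ) + 1)) +
      l * ∫ p, ((w (ns m)).1.1 p - (w (ns n)).1.1 p) ^ 2 ∂muO := by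
    intro m n
    have e : ∫ p, ((w (ns m)).1.1 p - (w (ns n)).1.1 p) ^ 2 ∂muO =
        fB (w (ns m) + (-1 : ℝ) • w (ns n)) (w (ns m) + (-1 : ℝ) • w (ns n)) := by
      rw [fB_self]; congr 1; ext p; simp [sub_eq_add_neg]
    have r := ray_le (w (ns m) + (1 : ℝ) • w (ns n))
    rw [e]
    rw [fA_add_smul, fB_add_smul, hB, hB] at *
    have := hA' m
    have := hA' n
    nlinarith
  have hE : ∀ ε > 0, ∃ K, ∀ m ≥ K, ∀ n ≥ K,
      fA (w (ns m) + (-1 : ℝ) • w (ns n)) (w (ns m) + (-1 : ℝ) • w (ns n)) < ε := by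
    intro ε hε
    obtain ⟨K1, hK1⟩ := hcau (ε / (2 * (l + 1))) (by positivity)
    obtain ⟨K2, hK2⟩ := exists_nat_gt (8 / ε)
    refine ⟨max K1 K2, fun m hm n hn => (hpar m n).trans_lt ?_⟩
    have a := hK1 m ((le_max_left _ _).trans hm) n ((le_max_left _ _).trans hn)
    have b : ∀ k ≥ max K1 K2, 1 / ((k : ℝ) + 1) < ε / 8 := by
      intro k hk
      have : (K2 : ℝ) ≤ k := by exact_mod_cast (le_max_right _ _).trans hk
      rw [div_lt_iff₀ hε] at hK2
      rw [div_lt_div_iff₀ (by positivity) (by norm_num)]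
      nlinarith
    have b1 := b m hm
    have b2 := b n hn
    rw [lt_div_iff₀ (by positivity)] at a
    have := N2_nonneg (μ := muO) (fun p => (w (ns m)).1.1 p - (w (ns n)).1.1 p)
    nlinarith
  have hE3 : ∀ m n, fA (w (ns m) + (-1 : ℝ) • w (ns n)) (w (ns m) + (-1 : ℝ) • w (ns n)) =
      (∫ p, ((w (ns m)).1.2.1 p - (w (ns n)).1.2.1 p) ^ 2 ∂muO) +
      (∫ p, ((w (ns m)).1.2.2 p - (w (ns n)).1.2.2 p) ^ 2 ∂muO) +
      ∫ p, (S p * (w (ns m)).1.1 p - S p * (w (ns n)).1.1 p) ^ 2 ∂muO := by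
    intro m n
    rw [fA_self]
    congr 1
    · congr 1 <;> · congr 1; ext p; simp [sub_eq_add_neg]
    · congr 1; ext p; simp; ring
  obtain ⟨u, mu, tu⟩ := L2_complete (fun n => (w (ns n)).m0) hcau
  obtain ⟨X, mX, tX⟩ := L2_complete (fun n => (w (ns n)).mx) (fun ε hε => by
    obtain ⟨K, hK⟩ := hE ε hε
    refine ⟨K, fun m hm n hn => lt_of_le_of_lt ?_ (hK m hm n hn)⟩
    rw [hE3, add_assoc]
    exact le_add_of_nonneg_right (add_nonneg (N2_nonneg _) (N2_nonneg _)))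
  obtain ⟨Y, mY, tY⟩ := L2_complete (fun n => (w (ns n)).my) (fun ε hε => by
    obtain ⟨K, hK⟩ := hE ε hε
    refine ⟨K, fun m hm n hn => lt_of_le_of_lt ?_ (hK m hm n hn)⟩
    rw [hE3, add_right_comm]
    exact le_add_of_nonneg_left (add_nonneg (N2_nonneg _) (N2_nonneg _)))
  obtain ⟨g, mg, tg⟩ := L2_complete (fun n => (w (ns n)).ms) (fun ε hε => by
    obtain ⟨K, hK⟩ := hE ε hε
    refine ⟨K, fun m hm n hn => lt_of_le_of_lt ?_ (hK m hm n hn)⟩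
    rw [hE3]
    exact le_add_of_nonneg_left (add_nonneg (N2_nonneg _) (N2_nonneg _)))
  have hcl : Cl α₁ α₂ u X Y := Cl.closed h1 h2 (fun n => (w (ns n)).cl) mu mX mY tu tX tY
  have hg : g =ᵐ[muO] fun p => S p * u p := by
    obtain ⟨k1, hk1, a1⟩ := L2_subseq mu (fun n => (w (ns n)).m0) tu
    obtain ⟨k2, hk2, a2⟩ := L2_subseq mg (fun n => (w (ns (k1 n))).ms)
      (tg.comp hk1.tendsto_atTop)
    filter_upwards [a1, a2] with p b1 b2
    have b3 := (b1.comp hk2.tendsto_atTop).const_mul (S p)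
    exact tendsto_nhds_unique b2 b3
  have mS : MemLp (fun p => S p * u p) 2 muO := (memLp_congr_ae hg).1 mg
  refine ⟨⟨(u, X, Y), hcl, mS⟩, ?_, ?_⟩
  · rw [fB_self]
    have := L2_tendsto_sq mu (fun n => (w (ns n)).m0) tu
    have e : ∀ n, ∫ p, (w (ns n)).1.1 p ^ 2 ∂muO = 1 := fun n => by rw [← fB_self, hB]
    simp only [e] at this
    exact (tendsto_nhds_unique this tendsto_const_nhds)
  · rw [fA_self]
    have q1 := L2_tendsto_sq mX (fun n => (w (ns n)).mx) tX
    have q2 := L2_tendsto_sq mY (fun n => (w (ns n)).my) tY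
    have q3 := L2_tendsto_sq mg (fun n => (w (ns n)).ms) tg
    have e : ∫ p, (S p * u p) ^ 2 ∂muO = ∫ p, g p ^ 2 ∂muO :=
      integral_congr_ae (by filter_upwards [hg] with p hp; rw [hp])
    have lim : Tendsto (fun n : ℕ => l + 1 / ((n : ℝ) + 1)) atTop (𝓝 (l + 0)) :=
      tendsto_const_nhds.add tendsto_one_div_add_atTop_nhds_zero_nat
    rw [add_zero] at lim
    simp only
    rw [e]
    refine le_of_tendsto_of_tendsto' ((q1.add q2).add q3) lim fun n => ?_
    rw [← fA_self]; exact (hA' n).le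

end ray

lemma lip_of {F F' : ℝ → ℝ} {L : ℝ} (hF : ∀ s, HasDerivAt F (F' s) s) (hL : ∀ s, |F' s| ≤ L)
    (a b : ℝ) : |F a - F b| ≤ L * |a - b| := by
  have := Convex.norm_image_sub_le_of_norm_hasDerivWithin_le (f := F) (f' := F') (C := L)
    (s := univ) (fun x _ => (hF x).hasDerivWithinAt) (fun x _ => hL x) convex_univ
    (mem_univ b) (mem_univ a)
  simpa using this

/-- Multiplication by bounded function. -/
lemma memLp_bdd {f g : ℝ × ℝ → ℝ} {C : ℝ} (hf : AEStronglyMeasurable f muO)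
    (hb : ∀ᵐ p ∂muO, |f p| ≤ C) (hg : MemLp g 2 muO) : MemLp (fun p => f p * g p) 2 muO := by
  refine hg.of_le_mul (c := C) (hf.mul hg.1) ?_
  filter_upwards [hb] with p hp
  simp only [Real.norm_eq_abs, abs_mul]
  gcongr

lemma memLp_F {F F' : ℝ → ℝ} {L : ℝ} (hF : ∀ s, HasDerivAt F (F' s) s) (hL : ∀ s, |F' s| ≤ L)
    {u : ℝ × ℝ → ℝ} (hu : MemLp u 2 muO) : MemLp (fun p => F (u p)) 2 muO := by
  have hc : Continuous F := continuous_iff_continuousAt.2 fun s => (hF s).continuousAt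
  have h2 : MemLp (fun p => F (u p) - F 0) 2 muO := by
    refine hu.of_le_mul (c := L) ((hc.comp_aestronglyMeasurable hu.1).sub
      aestronglyMeasurable_const) (ae_of_all _ fun p => ?_)
    simpa using lip_of hF hL (u p) 0
  have := h2.add (memLp_const (F 0))
  refine (memLp_congr_ae (ae_of_all _ fun p => ?_)).1 this
  simp

lemma chain_memLp {F F' : ℝ → ℝ} {L C : ℝ} (hF : ∀ s, HasDerivAt F (F' s) s)
    (hL : ∀ s, |F' s| ≤ L) (hF' : Continuous F') {χ ψ u X : ℝ × ℝ → ℝ}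
    (mχ : AEStronglyMeasurable χ muO) (mψ : AEStronglyMeasurable ψ muO)
    (bχ : ∀ᵐ p ∂muO, |χ p| ≤ C) (bψ : ∀ᵐ p ∂muO, |ψ p| ≤ C)
    (hu : MemLp u 2 muO) (hX : MemLp X 2 muO) :
    MemLp (fun p => ψ p * F (u p) + χ p * (F' (u p) * X p)) 2 muO :=
  (memLp_bdd mψ bψ (memLp_F hF hL hu)).add (memLp_bdd mχ bχ
    (memLp_bdd (hF'.comp_aestronglyMeasurable hu.1) (ae_of_all _ fun _ => hL _) hX))

lemma chain_tendsto {F F' : ℝ → ℝ} {L C : ℝ} (hF : ∀ s, HasDerivAt F (F' s) s)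
    (hL : ∀ s, |F' s| ≤ L) (hF' : Continuous F') {χ ψ u X : ℝ × ℝ → ℝ}
    (bχ : ∀ᵐ p ∂muO, |χ p| ≤ C) (bψ : ∀ᵐ p ∂muO, |ψ p| ≤ C)
    (hu : MemLp u 2 muO) (hX : MemLp X 2 muO) {un Xn : ℕ → ℝ × ℝ → ℝ}
    (hun : ∀ n, MemLp (un n) 2 muO) (hXn : ∀ n, MemLp (Xn n) 2 muO)
    (t0 : Tendsto (fun n => ∫ p, (un n p - u p) ^ 2 ∂muO) atTop (𝓝 0))
    (tx : Tendsto (fun n => ∫ p, (Xn n p - X p) ^ 2 ∂muO) atTop (𝓝 0))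
    (ta : ∀ᵐ p ∂muO, Tendsto (fun n => un n p) atTop (𝓝 (u p))) :
    Tendsto (fun n => ∫ p, ((ψ p * F (un n p) + χ p * (F' (un n p) * Xn n p)) -
      (ψ p * F (u p) + χ p * (F' (u p) * X p))) ^ 2 ∂muO) atTop (𝓝 0) := by
  have hD : Tendsto (fun n => ∫ p, ((F' (un n p) - F' (u p)) * X p) ^ 2 ∂muO) atTop (𝓝 0) := by
    have : (0:ℝ) = ∫ p, (0:ℝ) ∂muO := by simp
    rw [this]
    refine tendsto_integral_of_dominated_convergence (fun p => (2 * L * X p) ^ 2) (fun n => ?_)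
      (hX.const_mul (2 * L)).integrable_sq (fun n => ?_) ?_
    · exact (((hF'.comp_aestronglyMeasurable (hun n).1).sub
        (hF'.comp_aestronglyMeasurable hu.1)).mul hX.1).pow 2
    · refine ae_of_all _ fun p => ?_
      rw [Real.norm_eq_abs, abs_of_nonneg (sq_nonneg _), ← sq_abs, ← sq_abs (2 * L * X p)]
      have hL0 : 0 ≤ L := (abs_nonneg _).trans (hL 0)
      rw [abs_mul, abs_mul, abs_of_nonneg (by positivity : 0 ≤ 2 * L)]
      have : |F' (un n p) - F' (u p)| ≤ 2 * L := by
        have := abs_sub (F' (un n p)) (F' (u p))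
        linarith [hL (un n p), hL (u p)]
      gcongr
    · filter_upwards [ta] with p hp
      have := ((((hF'.tendsto _).comp hp).sub_const (F' (u p))).mul_const (X p)).pow 2
      simpa using this
  have hS : Tendsto (fun n => 3 * C ^ 2 * (L ^ 2 * (∫ p, (un n p - u p) ^ 2 ∂muO) +
      L ^ 2 * (∫ p, (Xn n p - X p) ^ 2 ∂muO) +
      ∫ p, ((F' (un n p) - F' (u p)) * X p) ^ 2 ∂muO)) atTop (𝓝 0) := by
    have := (((t0.const_mul (L ^ 2)).add (tx.const_mul (L ^ 2))).add hD).const_mul (3 * C ^ 2)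
    simpa using this
  refine squeeze_zero (fun n => N2_nonneg _) (fun n => ?_) hS
  have i1 : Integrable (fun p => (un n p - u p) ^ 2) muO := ((hun n).sub hu).integrable_sq
  have i2 : Integrable (fun p => (Xn n p - X p) ^ 2) muO := ((hXn n).sub hX).integrable_sq
  have i3 : Integrable (fun p => ((F' (un n p) - F' (u p)) * X p) ^ 2) muO := by
    refine (memLp_bdd (C := 2 * L) ((hF'.comp_aestronglyMeasurable (hun n).1).sub
        (hF'.comp_aestronglyMeasurable hu.1)) (ae_of_all _ fun p => ?_) hX).integrable_sq
    have := abs_sub (F' (un n p)) (F' (u p))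
    exact this.trans (by linarith [hL (un n p), hL (u p)])
  rw [← integral_const_mul, ← integral_const_mul, ← integral_add3 (i1.const_mul _)
    (i2.const_mul _) i3, ← integral_const_mul]
  refine integral_mono_of_nonneg (ae_of_all _ fun _ => sq_nonneg _)
    ((((i1.const_mul _).add (i2.const_mul _)).add i3).const_mul _) ?_
  filter_upwards [bχ, bψ] with p b1 b2
  have e : (ψ p * F (un n p) + χ p * (F' (un n p) * Xn n p)) -
      (ψ p * F (u p) + χ p * (F' (u p) * X p)) = ψ p * (F (un n p) - F (u p)) +
      χ p * (F' (un n p) * (Xn n p - X p)) + χ p * ((F' (un n p) - F' (u p)) * X p) := by ring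
  have q : ∀ a b c : ℝ, (a + b + c) ^ 2 ≤ 3 * (a ^ 2 + b ^ 2 + c ^ 2) := fun a b c => by
    nlinarith [sq_nonneg (a - b), sq_nonneg (b - c), sq_nonneg (a - c)]
  have c1 : (χ p) ^ 2 ≤ C ^ 2 := by rw [← sq_abs]; gcongr
  have c2 : (ψ p) ^ 2 ≤ C ^ 2 := by rw [← sq_abs]; gcongr
  have c3 : (F (un n p) - F (u p)) ^ 2 ≤ L ^ 2 * (un n p - u p) ^ 2 := by
    rw [← sq_abs, ← sq_abs (un n p - u p), ← mul_pow]
    gcongr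
    exact lip_of hF hL _ _
  have c4 : (F' (un n p)) ^ 2 ≤ L ^ 2 := by rw [← sq_abs]; gcongr; exact hL _
  change _ ≤ _
  rw [e]
  refine (q _ _ _).trans ?_
  rw [mul_pow, mul_pow (χ p), mul_pow (F' (un n p)), mul_pow (χ p)]
  have d1 : ψ p ^ 2 * (F (un n p) - F (u p)) ^ 2 ≤ C ^ 2 * (L ^ 2 * (un n p - u p) ^ 2) := by
    gcongr
  have d2 : χ p ^ 2 * (F' (un n p) ^ 2 * (Xn n p - X p) ^ 2) ≤
    C ^ 2 * (L ^ 2 * (Xn n p - X p) ^ 2) := by gcongr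
  have d3 : χ p ^ 2 * ((F' (un n p) - F' (u p)) * X p) ^ 2 ≤
    C ^ 2 * ((F' (un n p) - F' (u p)) * X p) ^ 2 := by gcongr
  linarith

lemma w_bdd {α₁ α₂ : ℝ} (h1 : 0 < α₁) (h2 : 0 < α₂) :
    ∀ᵐ p ∂muO, |p.2 ^ α₁| ≤ 1 ∧ |p.1 ^ α₂| ≤ 1 := by
  filter_upwards [muO_mem] with p hp
  obtain ⟨⟨a, b⟩, c, d⟩ := hp
  exact ⟨by rw [abs_of_nonneg (Real.rpow_nonneg c.le _)]; exact Real.rpow_le_one c.le d.le h1.le,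
    by rw [abs_of_nonneg (Real.rpow_nonneg a.le _)]; exact Real.rpow_le_one a.le b.le h2.le⟩

lemma Cl.chain {α₁ α₂ : ℝ} (h1 : 0 < α₁) (h2 : 0 < α₂) {u X Y : ℝ × ℝ → ℝ}
    (h : Cl α₁ α₂ u X Y) {F F' : ℝ → ℝ} {L C : ℝ} (hF : ∀ s, HasDerivAt F (F' s) s)
    (hL : ∀ s, |F' s| ≤ L) (hF' : Continuous F') {χ : ℝ × ℝ → ℝ} (cχ : ContDiff ℝ 1 χ)
    (b0 : ∀ p, |χ p| ≤ C) (bx : ∀ p, |pdx χ p| ≤ C) (bY : ∀ p, |pdy χ p| ≤ C)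
    (hT : ∀ φ, IsTest φ → IsTest (fun p => χ p * F (φ p))) :
    Cl α₁ α₂ (fun p => χ p * F (u p))
      (fun p => p.2 ^ α₁ * pdx χ p * F (u p) + χ p * (F' (u p) * X p))
      (fun p => p.1 ^ α₂ * pdy χ p * F (u p) + χ p * (F' (u p) * Y p)) := by
  obtain ⟨φ, hφ, s0, sx, sy⟩ := h.seq
  obtain ⟨m0, mx, my, -⟩ := h
  obtain ⟨ns, hns, ha⟩ := L2_subseq m0 (fun n => (hφ n).m0) s0
  have s0 := s0.comp hns.tendsto_atTop
  have sx := sx.comp hns.tendsto_atTop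
  have sy := sy.comp hns.tendsto_atTop
  have mχ : AEStronglyMeasurable χ muO := cχ.continuous.aestronglyMeasurable
  have mχx : AEStronglyMeasurable (fun p => p.2 ^ α₁ * pdx χ p) muO :=
    ((wy_cont h1).mul (pdx_cont cχ)).aestronglyMeasurable
  have mχy : AEStronglyMeasurable (fun p => p.1 ^ α₂ * pdy χ p) muO :=
    ((wx_cont h2).mul (pdy_cont cχ)).aestronglyMeasurable
  have bχ : ∀ᵐ p ∂muO, |χ p| ≤ C := ae_of_all _ b0
  have bχx : ∀ᵐ p ∂muO, |p.2 ^ α₁ * pdx χ p| ≤ C := by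
    filter_upwards [w_bdd h1 h2] with p hp
    rw [abs_mul]
    have := mul_le_mul hp.1 (bx p) (abs_nonneg _) zero_le_one
    linarith
  have bχy : ∀ᵐ p ∂muO, |p.1 ^ α₂ * pdy χ p| ≤ C := by
    filter_upwards [w_bdd h1 h2] with p hp
    rw [abs_mul]
    have := mul_le_mul hp.2 (bY p) (abs_nonneg _) zero_le_one
    linarith
  have b00 : ∀ᵐ p ∂muO, |(fun _ : ℝ × ℝ => (0:ℝ)) p| ≤ C :=
    ae_of_all _ fun p => by simpa using (abs_nonneg _).trans (b0 p)
  have hd : ∀ n p, HasFDerivAt (fun p => χ p * F (φ (ns n) p))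
      (χ p • (F' (φ (ns n) p) • fderiv ℝ (φ (ns n)) p) + F (φ (ns n) p) • fderiv ℝ χ p) p := by
    intro n p
    have e1 := ((cχ.differentiable (by norm_num)) p).hasFDerivAt
    have e2 := (hF (φ (ns n) p)).comp_hasFDerivAt p ((hφ (ns n)).diff p).hasFDerivAt
    exact e1.mul e2
  have epx : ∀ n p, p.2 ^ α₁ * pdx (fun p => χ p * F (φ (ns n) p)) p =
      p.2 ^ α₁ * pdx χ p * F (φ (ns n) p) +
      χ p * (F' (φ (ns n) p) * (p.2 ^ α₁ * pdx (φ (ns n)) p)) := by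
    intro n p
    unfold pdx
    rw [(hd n p).fderiv]
    simp; ring
  have epy : ∀ n p, p.1 ^ α₂ * pdy (fun p => χ p * F (φ (ns n) p)) p =
      p.1 ^ α₂ * pdy χ p * F (φ (ns n) p) +
      χ p * (F' (φ (ns n) p) * (p.1 ^ α₂ * pdy (φ (ns n)) p)) := by
    intro n p
    unfold pdy
    rw [(hd n p).fderiv]
    simp; ring
  refine Cl.closed h1 h2 (fun n => Cl_test h1 h2 (hT _ (hφ (ns n)))) ?_ ?_ ?_ ?_ ?_ ?_
  · exact memLp_bdd mχ bχ (memLp_F hF hL m0)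
  · exact chain_memLp hF hL hF' mχ mχx bχ bχx m0 mx
  · exact chain_memLp hF hL hF' mχ mχy bχ bχy m0 my
  · have := chain_tendsto hF hL hF' (χ := fun _ => 0) (ψ := χ) b00 bχ m0 mx
      (fun n => (hφ (ns n)).m0) (fun n => (hφ (ns n)).mx h1) s0 sx ha
    simpa using this
  · have := chain_tendsto hF hL hF' bχ bχx m0 mx
      (fun n => (hφ (ns n)).m0) (fun n => (hφ (ns n)).mx h1) s0 sx ha
    simpa only [epx] using this
  · have := chain_tendsto hF hL hF' bχ bχy m0 my
      (fun n => (hφ (ns n)).m0) (fun n => (hφ (ns n)).my h2) s0 sy ha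
    simpa only [epy] using this

/-- Test functions from `F 0 = 0`. -/
lemma test_F {F : ℝ → ℝ} (hF : ContDiff ℝ (⊤ : ℕ∞) F) (h0 : F 0 = 0) (φ : ℝ × ℝ → ℝ)
    (hφ : IsTest φ) : IsTest (fun p => F (φ p)) := by
  refine ⟨hF.comp hφ.1, hφ.2.1.comp_left h0, (tsupport_comp_subset h0 φ).trans hφ.2.2⟩

lemma test_χF {F : ℝ → ℝ} (hF : ContDiff ℝ (⊤ : ℕ∞) F) {χ : ℝ × ℝ → ℝ} (hχ : IsTest χ)
    (φ : ℝ × ℝ → ℝ) (hφ : IsTest φ) : IsTest (fun p => χ p * F (φ p)) := by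
  refine ⟨hχ.1.mul (hF.comp hφ.1), hχ.2.1.mul_right, (tsupport_mul_subset_left).trans hχ.2.2⟩

lemma Cl.chain0 {α₁ α₂ : ℝ} (h1 : 0 < α₁) (h2 : 0 < α₂) {u X Y : ℝ × ℝ → ℝ}
    (h : Cl α₁ α₂ u X Y) {F F' : ℝ → ℝ} {L : ℝ} (hF : ∀ s, HasDerivAt F (F' s) s)
    (hL : ∀ s, |F' s| ≤ L) (hF' : Continuous F') (cF : ContDiff ℝ (⊤ : ℕ∞) F) (h0 : F 0 = 0) :
    Cl α₁ α₂ (fun p => F (u p)) (fun p => F' (u p) * X p) (fun p => F' (u p) * Y p) := by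
  have := Cl.chain h1 h2 h hF hL hF' (χ := fun _ => 1) (C := 1) contDiff_const (by simp)
    (by simp [pdx]) (by simp [pdy]) (by simpa using test_F cF h0)
  simpa [pdx, pdy] using this

/-- `√(s²+e²)`. -/
def Rr (e s : ℝ) : ℝ := √(s ^ 2 + e ^ 2)

lemma Rr_pos {e : ℝ} (he : 0 < e) (s : ℝ) : 0 < Rr e s := Real.sqrt_pos.2 (by positivity)

lemma Rr_sq {e : ℝ} (s : ℝ) : Rr e s ^ 2 = s ^ 2 + e ^ 2 := Real.sq_sqrt (by positivity)

lemma Rr_contDiff {e : ℝ} (he : 0 < e) : ContDiff ℝ (⊤ : ℕ∞) (Rr e) :=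
  ContDiff.sqrt (by fun_prop) fun s => by positivity

lemma Rr_deriv {e : ℝ} (he : 0 < e) (s : ℝ) : HasDerivAt (Rr e) (s / Rr e s) s := by
  have h : HasDerivAt (fun s : ℝ => s ^ 2 + e ^ 2) (2 * s) s := by
    simpa using ((hasDerivAt_id s).pow 2).add_const (e ^ 2)
  have := h.sqrt (by positivity)
  have e1 : s / Rr e s = 2 * s / (2 * Rr e s) := by
    have := Rr_pos he s
    field_simp
  rw [e1]; exact this

lemma Rr_cont (e : ℝ) : Continuous (Rr e) := by unfold Rr; fun_prop

lemma abs_le_Rr (e s : ℝ) : |s| ≤ Rr e s := Real.abs_le_sqrt (by nlinarith [sq_nonneg e])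

lemma e_le_Rr {e : ℝ} (s : ℝ) : e ≤ Rr e s := Real.le_sqrt_of_sq_le (by nlinarith [sq_nonneg s])

/-- Vanishing sequence. -/
def en (n : ℕ) : ℝ := 1 / ((n : ℝ) + 1)

lemma en_pos (n : ℕ) : 0 < en n := by unfold en; positivity

lemma en_tend : Tendsto en atTop (𝓝 0) := tendsto_one_div_add_atTop_nhds_zero_nat

lemma en_le (n : ℕ) : en n ≤ 1 := by
  unfold en; rw [div_le_one (by positivity)]; linarith [(Nat.cast_nonneg n : (0:ℝ) ≤ n)]

lemma Rr_tend (s : ℝ) : Tendsto (fun n => Rr (en n) s) atTop (𝓝 |s|) := by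
  have : Continuous fun e : ℝ => Rr e s := by unfold Rr; fun_prop
  have := (this.tendsto 0).comp en_tend
  simpa [Rr, Real.sqrt_sq_eq_abs, Function.comp_def] using this

/-- Sign. -/
def sg (s : ℝ) : ℝ := s / |s|

lemma sg_meas : Measurable sg := measurable_id.div measurable_id.abs

lemma sg_abs (s : ℝ) : |sg s| ≤ 1 := by
  unfold sg; rw [abs_div, abs_abs]; exact div_self_le_one _

lemma sg_zero : sg 0 = 0 := by simp [sg]

lemma div_Rr_tend (s : ℝ) : Tendsto (fun n => s / Rr (en n) s) atTop (𝓝 (sg s)) := by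
  rcases eq_or_ne s 0 with rfl | hs
  · simp [sg]
  · exact tendsto_const_nhds.div (Rr_tend s) (abs_ne_zero.2 hs)

lemma div_Rr_abs {e : ℝ} (he : 0 < e) (s : ℝ) : |s / Rr e s| ≤ 1 := by
  rw [abs_div, abs_of_pos (Rr_pos he s), div_le_one (Rr_pos he s)]; exact abs_le_Rr e s

lemma tend_bdd_mul {X : ℝ × ℝ → ℝ} {f : ℝ × ℝ → ℝ} {fn : ℕ → ℝ × ℝ → ℝ} (hX : MemLp X 2 muO)
    (hf : AEStronglyMeasurable f muO) (hfn : ∀ n, AEStronglyMeasurable (fn n) muO)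
    (bf : ∀ p, |f p| ≤ 1) (bfn : ∀ n p, |fn n p| ≤ 1)
    (t : ∀ p, Tendsto (fun n => fn n p) atTop (𝓝 (f p))) :
    Tendsto (fun n => ∫ p, (fn n p * X p - f p * X p) ^ 2 ∂muO) atTop (𝓝 0) := by
  have : (0:ℝ) = ∫ p, (0:ℝ) ∂muO := by simp
  rw [this]
  refine tendsto_integral_of_dominated_convergence (fun p => (2 * X p) ^ 2) (fun n => ?_)
    (hX.const_mul 2).integrable_sq (fun n => ?_) ?_
  · exact (((hfn n).mul hX.1).sub (hf.mul hX.1)).pow 2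
  · refine ae_of_all _ fun p => ?_
    rw [Real.norm_eq_abs, abs_of_nonneg (sq_nonneg _), ← sub_mul, ← sq_abs, ← sq_abs (2 * X p)]
    rw [abs_mul, abs_mul]
    have := abs_sub (fn n p) (f p)
    have : |fn n p - f p| ≤ |2| := by
      rw [abs_of_pos (by norm_num : (0:ℝ) < 2)]; linarith [bf p, bfn n p]
    gcongr
  · refine ae_of_all _ fun p => ?_
    have := (((t p).mul_const (X p)).sub_const (f p * X p)).pow 2
    simpa using this

lemma Cl.abs {α₁ α₂ : ℝ} (h1 : 0 < α₁) (h2 : 0 < α₂) {u X Y : ℝ × ℝ → ℝ}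
    (h : Cl α₁ α₂ u X Y) :
    Cl α₁ α₂ (fun p => |u p|) (fun p => sg (u p) * X p) (fun p => sg (u p) * Y p) := by
  have hn : ∀ n, Cl α₁ α₂ (fun p => Rr (en n) (u p) - en n)
      (fun p => u p / Rr (en n) (u p) * X p) (fun p => u p / Rr (en n) (u p) * Y p) := by
    intro n
    have hp := en_pos n
    refine Cl.chain0 h1 h2 h (F := fun s => Rr (en n) s - en n)
      (F' := fun s => s / Rr (en n) s) (L := 1)
      (fun s => (Rr_deriv hp s).sub_const _) (div_Rr_abs hp)
      (continuous_id.div (Rr_cont _) fun s => (Rr_pos hp s).ne') ((Rr_contDiff hp).sub contDiff_const) ?_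
    simp [Rr, Real.sqrt_sq hp.le]
  obtain ⟨m0, mx, my, -⟩ := h
  have ms : AEStronglyMeasurable (fun p => sg (u p)) muO :=
    (sg_meas.comp_aemeasurable m0.1.aemeasurable).aestronglyMeasurable
  have mn : ∀ n, AEStronglyMeasurable (fun p => u p / Rr (en n) (u p)) muO := fun n =>
    (continuous_id.div (Rr_cont _) fun s => (Rr_pos (en_pos n) s).ne').comp_aestronglyMeasurable m0.1
  refine Cl.closed h1 h2 hn m0.abs (memLp_bdd ms (ae_of_all _ fun _ => sg_abs _) mx)
    (memLp_bdd ms (ae_of_all _ fun _ => sg_abs _) my) ?_ ?_ ?_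
  · have : (0:ℝ) = ∫ p, (0:ℝ) ∂muO := by simp
    rw [this]
    refine tendsto_integral_of_dominated_convergence (fun p => (1:ℝ)) (fun n => ?_)
      (integrable_const _) (fun n => ?_) ?_
    · exact (((Rr_cont _).comp_aestronglyMeasurable m0.1 |>.sub aestronglyMeasurable_const).sub
        m0.abs.1).pow 2
    · refine ae_of_all _ fun p => ?_
      rw [Real.norm_eq_abs, abs_of_nonneg (sq_nonneg _), sq_le_one_iff_abs_le_one, abs_le]
      have a := abs_le_Rr (en n) (u p)
      have b : Rr (en n) (u p) ≤ |u p| + en n := by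
        unfold Rr
        rw [Real.sqrt_le_left (by have := en_pos n; positivity)]
        nlinarith [sq_abs (u p), abs_nonneg (u p), en_pos n]
      constructor <;> linarith [en_pos n, en_le n]
    · refine ae_of_all _ fun p => ?_
      have := (((Rr_tend (u p)).sub en_tend).sub_const |u p|).pow 2
      simpa using this
  · exact tend_bdd_mul mx ms mn (fun _ => sg_abs _) (fun n _ => div_Rr_abs (en_pos n) _)
      (fun _ => div_Rr_tend _)
  · exact tend_bdd_mul my ms mn (fun _ => sg_abs _) (fun n _ => div_Rr_abs (en_pos n) _)
      (fun _ => div_Rr_tend _)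

section habs
variable {α₁ α₂ : ℝ} {h1 : 0 < α₁} {h2 : 0 < α₂} {S : ℝ × ℝ → ℝ}

/-- Absolute value of an element of the energy space. -/
def habs (w : HS α₁ α₂ h1 h2 S) : HS α₁ α₂ h1 h2 S :=
  ⟨(fun p => |w.1.1 p|, fun p => sg (w.1.1 p) * w.1.2.1 p, fun p => sg (w.1.1 p) * w.1.2.2 p),
    w.cl.abs h1 h2, by
      refine w.ms.of_le_mul (c := 1) ?_ (ae_of_all _ fun p => by simp [abs_mul])
      have : (fun p => S p * |w.1.1 p|) = fun p => sg (w.1.1 p) * (S p * w.1.1 p) := by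
        ext p
        unfold sg
        rcases eq_or_ne (w.1.1 p) 0 with h | h
        · simp [h]
        · have := abs_ne_zero.2 h
          field_simp
          rw [sq_abs]
      rw [this]
      exact (sg_meas.comp_aemeasurable w.m0.1.aemeasurable).aestronglyMeasurable.mul w.ms.1⟩

lemma habs_fB (w : HS α₁ α₂ h1 h2 S) : fB (habs w) (habs w) = fB w w := by
  rw [fB_self, fB_self]; simp [habs]

lemma sg_mul_sq (s x : ℝ) : (sg s * x) ^ 2 ≤ x ^ 2 := by
  rw [mul_pow]
  have : sg s ^ 2 ≤ 1 := (sq_le_one_iff_abs_le_one _).2 (sg_abs s)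
  nlinarith [sq_nonneg x]

lemma habs_fA (w : HS α₁ α₂ h1 h2 S) : fA (habs w) (habs w) ≤ fA w w := by
  rw [fA_self, fA_self]
  have e : ∫ p, (S p * (habs w).1.1 p) ^ 2 ∂muO = ∫ p, (S p * w.1.1 p) ^ 2 ∂muO := by
    simp [habs, mul_pow]
  rw [e]
  have i1 := integral_mono (habs w).mx.integrable_sq w.mx.integrable_sq
    (fun p => sg_mul_sq (w.1.1 p) (w.1.2.1 p))
  have i2 := integral_mono (habs w).my.integrable_sq w.my.integrable_sq
    (fun p => sg_mul_sq (w.1.1 p) (w.1.2.2 p))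
  linarith

end habs

lemma bump_exists {d : ℝ} (hd : 0 < d) (hd2 : d < 1 / 2) : ∃ χ : ℝ × ℝ → ℝ, IsTest χ ∧
    (∀ p, 0 ≤ χ p) ∧ (∀ p, χ p ≤ 1) ∧ ∀ p ∈ sqr d d (1 - 2 * d), χ p = 1 := by
  let f : ContDiffBump ((1/2, 1/2) : ℝ × ℝ) := ⟨1/2 - d, 1/2 - d/2, by linarith, by linarith⟩
  refine ⟨f, ⟨f.contDiff, f.hasCompactSupport, ?_⟩, fun p => f.nonneg, fun p => f.le_one, ?_⟩
  · rw [f.tsupport_eq]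
    rintro ⟨x, y⟩ hp
    rw [← closedBall_prod_same, mem_prod, Metric.mem_closedBall, Metric.mem_closedBall,
      Real.dist_eq, Real.dist_eq, abs_le, abs_le] at hp
    change (_ ≤ _ ∧ x - 1/2 ≤ 1/2 - d/2) ∧ (_ ≤ _ ∧ y - 1/2 ≤ 1/2 - d/2) at hp
    obtain ⟨⟨a, b⟩, c, e⟩ := hp
    have a' : -(1/2 - d/2) ≤ x - 1/2 := a
    have c' : -(1/2 - d/2) ≤ y - 1/2 := c
    refine ⟨⟨?_, ?_⟩, ?_, ?_⟩ <;> simp only <;> linarith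
  · rintro ⟨x, y⟩ ⟨⟨a, b⟩, c, e⟩
    refine f.one_of_mem_closedBall ?_
    rw [← closedBall_prod_same, mem_prod, Metric.mem_closedBall, Metric.mem_closedBall,
      Real.dist_eq, Real.dist_eq, abs_le, abs_le]
    simp only at a b c e
    change (-(1/2 - d) ≤ x - 1/2 ∧ x - 1/2 ≤ 1/2 - d) ∧ (-(1/2 - d) ≤ y - 1/2 ∧ y - 1/2 ≤ 1/2 - d)
    refine ⟨⟨?_, ?_⟩, ?_, ?_⟩ <;> linarith

lemma test_bdd {χ : ℝ × ℝ → ℝ} (h : IsTest χ) : ∃ C, (∀ p, |χ p| ≤ C) ∧ (∀ p, |pdx χ p| ≤ C) ∧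
    ∀ p, |pdy χ p| ≤ C := by
  obtain ⟨a, ha⟩ := h.2.1.exists_bound_of_continuous h.1.continuous
  obtain ⟨b, hb⟩ := h.pdx_supp.exists_bound_of_continuous (pdx_cont h.c1)
  obtain ⟨c, hc⟩ := h.pdy_supp.exists_bound_of_continuous (pdy_cont h.c1)
  exact ⟨max a (max b c), fun p => (ha p).trans (le_max_left _ _),
    fun p => (hb p).trans ((le_max_left _ _).trans (le_max_right _ _)),
    fun p => (hc p).trans ((le_max_right _ _).trans (le_max_right _ _))⟩

lemma Cl.chainχ {α₁ α₂ : ℝ} (h1 : 0 < α₁) (h2 : 0 < α₂) {u X Y : ℝ × ℝ → ℝ}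
    (h : Cl α₁ α₂ u X Y) {F F' : ℝ → ℝ} {L : ℝ} (hF : ∀ s, HasDerivAt F (F' s) s)
    (hL : ∀ s, |F' s| ≤ L) (hF' : Continuous F') (cF : ContDiff ℝ (⊤ : ℕ∞) F)
    {χ : ℝ × ℝ → ℝ} (hχ : IsTest χ) :
    Cl α₁ α₂ (fun p => χ p * F (u p))
      (fun p => p.2 ^ α₁ * pdx χ p * F (u p) + χ p * (F' (u p) * X p))
      (fun p => p.1 ^ α₂ * pdy χ p * F (u p) + χ p * (F' (u p) * Y p)) := by
  obtain ⟨C, b0, bx, bY⟩ := test_bdd hχ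
  exact Cl.chain h1 h2 h hF hL hF' hχ.c1 b0 bx bY (test_χF cF hχ)

/-- Regularised reciprocal. -/
def Fe (e s : ℝ) : ℝ := (Rr e s - s) / e ^ 2

/-- Minus the derivative of `Fe`. -/
def Ge (e s : ℝ) : ℝ := (1 - s / Rr e s) / e ^ 2

lemma Ge_cont {e : ℝ} (he : 0 < e) : Continuous (Ge e) :=
  (continuous_const.sub (continuous_id.div (Rr_cont _) fun s => (Rr_pos he s).ne')).div_const _

lemma Fe_deriv {e : ℝ} (he : 0 < e) (s : ℝ) : HasDerivAt (Fe e) (-Ge e s) s := by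
  have := ((Rr_deriv he s).sub (hasDerivAt_id s)).div_const (e ^ 2)
  have e1 : -Ge e s = (s / Rr e s - 1) / e ^ 2 := by unfold Ge; ring
  rw [e1]; exact this

lemma Fe_contDiff {e : ℝ} (he : 0 < e) : ContDiff ℝ (⊤ : ℕ∞) (Fe e) :=
  ((Rr_contDiff he).sub contDiff_id).div_const _

lemma Ge_abs {e : ℝ} (he : 0 < e) (s : ℝ) : |-Ge e s| ≤ 2 / e ^ 2 := by
  unfold Ge
  rw [abs_neg, abs_div, abs_of_pos (by positivity : 0 < e ^ 2)]
  have := abs_le.1 (div_Rr_abs he s)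
  gcongr
  rw [abs_le]; constructor <;> linarith

lemma Fe_facts {e s : ℝ} (he : 0 < e) (hs : 0 ≤ s) :
    0 ≤ Fe e s ∧ s * Fe e s ≤ 1 ∧ Fe e s ≤ 1 / e ∧ Fe e s ^ 2 ≤ Ge e s := by
  have hR := Rr_pos he s
  have hq := Rr_sq (e := e) s
  have hle : s ≤ Rr e s := (le_abs_self s).trans (abs_le_Rr e s)
  unfold Fe Ge
  set R := Rr e s
  refine ⟨div_nonneg (by linarith) (by positivity), ?_, ?_, ?_⟩
  · rw [mul_div_assoc', div_le_one (by positivity)]; nlinarith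
  · rw [div_le_div_iff₀ (by positivity) he]
    have : R ≤ s + e := by nlinarith
    nlinarith
  · have e1 : (1 - s / R) / e ^ 2 = (R - s) / (R * e ^ 2) := by field_simp
    rw [e1, div_pow, div_le_div_iff₀ (by positivity) (by positivity)]
    have : (R - s) * R ≤ e ^ 2 := by nlinarith
    have h3 : 0 ≤ (R - s) * e ^ 2 := mul_nonneg (by linarith) (by positivity)
    nlinarith

lemma pd_sq {χ : ℝ × ℝ → ℝ} (h : IsTest χ) (p : ℝ × ℝ) :
    pdx (fun p => χ p * χ p) p = 2 * χ p * pdx χ p ∧ pdy (fun p => χ p * χ p) p = 2 * χ p * pdy χ p := by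
  have e := ((h.diff p).hasFDerivAt.mul (h.diff p).hasFDerivAt).fderiv
  have e' : fderiv ℝ (fun p => χ p * χ p) p = χ p • fderiv ℝ χ p + χ p • fderiv ℝ χ p := e
  unfold pdx pdy
  rw [e']
  constructor <;> · simp; ring

lemma young {a d F G X C : ℝ} (hF : F ^ 2 ≤ G) (hd : d ^ 2 ≤ C ^ 2) :
    X * (2 * a * d * F + a * a * (-G * X)) ≤ -(1/2) * (a * a * G * X ^ 2) + 2 * C ^ 2 := by
  have h1 : a ^ 2 * X ^ 2 * F ^ 2 ≤ a ^ 2 * X ^ 2 * G := by gcongr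
  nlinarith [sq_nonneg (a * F * X - 2 * d)]

section smp
variable {α₁ α₂ : ℝ} {h1 : 0 < α₁} {h2 : 0 < α₂} {S : ℝ × ℝ → ℝ}

lemma caccioppoli (hS : MemLp S 2 muO) {w : HS α₁ α₂ h1 h2 S} {l : ℝ} (hl : 0 ≤ l)
    (hw : ∀ v, fA w v = l * fB w v) (h0 : ∀ p, 0 ≤ w.1.1 p) {χ : ℝ × ℝ → ℝ} (hχ : IsTest χ)
    (c0 : ∀ p, 0 ≤ χ p) (c1 : ∀ p, χ p ≤ 1) : ∃ K, ∀ e > 0,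
    Integrable (fun p => χ p * χ p * Ge e (w.1.1 p) * (w.1.2.1 p ^ 2 + w.1.2.2 p ^ 2)) muO ∧
    ∫ p, χ p * χ p * Ge e (w.1.1 p) * (w.1.2.1 p ^ 2 + w.1.2.2 p ^ 2) ∂muO ≤ K := by
  obtain ⟨C, -, bx, bY⟩ := test_bdd hχ
  refine ⟨2 * ∫ p, (4 * C ^ 2 + S p ^ 2) ∂muO, fun e he => ?_⟩
  set u := w.1.1 with hu
  set X := w.1.2.1 with hX
  set Y := w.1.2.2 with hY
  have hχ2 : IsTest (fun p => χ p * χ p) :=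
    ⟨hχ.1.mul hχ.1, hχ.2.1.mul_right, (tsupport_mul_subset_left).trans hχ.2.2⟩
  have hcl := Cl.chainχ h1 h2 w.cl (Fe_deriv he) (Ge_abs he) (Ge_cont he).neg (Fe_contDiff he) hχ2
  have mF : AEStronglyMeasurable (fun p => χ p * χ p * Fe e (u p)) muO := hcl.1.1
  have hbd : ∀ p, |χ p * χ p * Fe e (u p)| ≤ 1 / e := by
    intro p
    obtain ⟨f0, -, f2, -⟩ := Fe_facts he (h0 p)
    rw [abs_of_nonneg (mul_nonneg (mul_nonneg (c0 p) (c0 p)) f0)]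
    have : χ p * χ p ≤ 1 := mul_le_one₀ (c1 p) (c0 p) (c1 p)
    exact (mul_le_of_le_one_left f0 this).trans f2
  have hSv : MemLp (fun p => S p * (χ p * χ p * Fe e (u p))) 2 muO := by
    have := memLp_bdd mF (ae_of_all _ hbd) hS
    simpa only [mul_comm] using this
  let v : HS α₁ α₂ h1 h2 S := ⟨(_, _, _), hcl, hSv⟩
  have mG : AEStronglyMeasurable (fun p => χ p * χ p * Ge e (u p)) muO :=
    ((hχ.1.continuous.mul hχ.1.continuous).aestronglyMeasurable).mul
      ((Ge_cont he).comp_aestronglyMeasurable w.m0.1)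
  have hint : Integrable (fun p => χ p * χ p * Ge e (u p) * (X p ^ 2 + Y p ^ 2)) muO := by
    refine (w.mx.integrable_sq.add w.my.integrable_sq).bdd_mul (c := 2 / e ^ 2) mG
      (ae_of_all _ fun p => ?_)
    rw [Real.norm_eq_abs, abs_mul]
    have a := Ge_abs he (u p)
    rw [abs_neg] at a
    have : |χ p * χ p| ≤ 1 := by
      rw [abs_of_nonneg (mul_nonneg (c0 p) (c0 p))]; exact mul_le_one₀ (c1 p) (c0 p) (c1 p)
    exact (mul_le_of_le_one_left (abs_nonneg _) this).trans a
  refine ⟨hint, ?_⟩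
  have hE := hw v
  have j1 := L2_mul w.mx v.mx
  have j2 := L2_mul w.my v.my
  have j3 := L2_mul w.ms v.ms
  have j4 := (L2_mul w.m0 v.m0).const_mul l
  unfold fA fB at hE
  rw [← integral_add3 j1 j2 j3, ← integral_const_mul, ← sub_eq_zero] at hE
  have hE2 := (integral_sub ((j1.add j2).add j3) j4).trans hE
  have jS : Integrable (fun p => 4 * C ^ 2 + S p ^ 2) muO :=
    (integrable_const _).add hS.integrable_sq
  have hle := integral_mono_ae (((j1.add j2).add j3).sub j4)
    ((hint.const_mul (-(1/2))).add jS) (by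
    filter_upwards [w_bdd h1 h2] with p hp
    obtain ⟨f0, f1, -, f3⟩ := Fe_facts he (h0 p)
    have dx : (p.2 ^ α₁ * pdx χ p) ^ 2 ≤ C ^ 2 := by
      rw [← sq_abs, abs_mul]
      have := mul_le_mul hp.1 (bx p) (abs_nonneg _) zero_le_one
      rw [one_mul] at this
      gcongr
    have dy : (p.1 ^ α₂ * pdy χ p) ^ 2 ≤ C ^ 2 := by
      rw [← sq_abs, abs_mul]
      have := mul_le_mul hp.2 (bY p) (abs_nonneg _) zero_le_one
      rw [one_mul] at this
      gcongr
    have y1 := young (a := χ p) (X := X p) f3 dx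
    have y2 := young (a := χ p) (X := Y p) f3 dy
    have hc : χ p * χ p ≤ 1 := mul_le_one₀ (c1 p) (c0 p) (c1 p)
    have hc0 : 0 ≤ χ p * χ p := mul_nonneg (c0 p) (c0 p)
    have y3 : (S p * u p) * (S p * (χ p * χ p * Fe e (u p))) ≤ S p ^ 2 := by
      have : χ p * χ p * (u p * Fe e (u p)) ≤ 1 :=
        mul_le_one₀ hc (mul_nonneg (h0 p) f0) f1
      have := mul_le_mul_of_nonneg_left this (sq_nonneg (S p))
      linarith
    have y4 : 0 ≤ l * (u p * (χ p * χ p * Fe e (u p))) :=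
      mul_nonneg hl (mul_nonneg (h0 p) (mul_nonneg hc0 f0))
    have ex : v.1.2.1 p = 2 * χ p * (p.2 ^ α₁ * pdx χ p) * Fe e (u p) +
        χ p * χ p * (-Ge e (u p) * X p) := by
      change p.2 ^ α₁ * pdx (fun p => χ p * χ p) p * Fe e (u p) +
        χ p * χ p * (-Ge e (u p) * X p) = _
      rw [(pd_sq hχ p).1]; ring
    have ey : v.1.2.2 p = 2 * χ p * (p.1 ^ α₂ * pdy χ p) * Fe e (u p) +
        χ p * χ p * (-Ge e (u p) * Y p) := by
      change p.1 ^ α₂ * pdy (fun p => χ p * χ p) p * Fe e (u p) +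
        χ p * χ p * (-Ge e (u p) * Y p) = _
      rw [(pd_sq hχ p).2]; ring
    have e0 : v.1.1 p = χ p * χ p * Fe e (u p) := rfl
    simp only [Pi.sub_apply, Pi.add_apply]
    rw [ex, ey, e0]
    linarith)
  have e2 := integral_add (hint.const_mul (-(1/2))) jS
  have e4 := (hE2.symm.le.trans hle).trans e2.le
  rw [integral_const_mul] at e4
  linarith

end smp

lemma Ge_tend {s : ℝ} (hs : 0 < s) : Tendsto (fun n => Ge (en n) s) atTop (𝓝 (1 / (2 * s ^ 2))) := by
  have e : ∀ n, Ge (en n) s = 1 / (Rr (en n) s * (Rr (en n) s + s)) := by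
    intro n
    have he := en_pos n
    have hR := Rr_pos he s
    have hq := Rr_sq (e := en n) s
    unfold Ge
    rw [eq_div_iff (by positivity)]
    field_simp
    linarith
  simp only [e]
  have h := Rr_tend s
  rw [abs_of_pos hs] at h
  have : 2 * s ^ 2 = s * (s + s) := by ring
  rw [this]
  exact tendsto_const_nhds.div (h.mul (h.add_const s)) (by positivity)

lemma Ge_nonneg {e s : ℝ} (he : 0 < e) (hs : 0 ≤ s) : 0 ≤ Ge e s :=
  (sq_nonneg _).trans (Fe_facts he hs).2.2.2

/-- Regularised sign. -/
def We (e s : ℝ) : ℝ := s / Rr e s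

lemma We_deriv {e : ℝ} (he : 0 < e) (s : ℝ) : HasDerivAt (We e) (e ^ 2 / Rr e s ^ 3) s := by
  have hR := Rr_pos he s
  have := (hasDerivAt_id s).div (Rr_deriv he s) hR.ne'
  have e1 : e ^ 2 / Rr e s ^ 3 = (1 * Rr e s - id s * (s / Rr e s)) / Rr e s ^ 2 := by
    have hq := Rr_sq (e := e) s
    simp only [id]
    field_simp
    linarith
  rw [e1]; exact this

lemma We_abs' {e : ℝ} (he : 0 < e) (s : ℝ) : |e ^ 2 / Rr e s ^ 3| ≤ e ^ 2 / e ^ 3 := by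
  have hR := Rr_pos he s
  rw [abs_of_nonneg (by positivity)]
  gcongr
  exact e_le_Rr s

lemma We_small {e s : ℝ} (he : 0 < e) (hs : 0 < s) : e ^ 2 / Rr e s ^ 3 ≤ 1 / s := by
  have hR := Rr_pos he s
  rw [div_le_div_iff₀ (by positivity) hs, one_mul]
  have a : e ≤ Rr e s := e_le_Rr s
  have b : s ≤ Rr e s := (le_abs_self s).trans (abs_le_Rr e s)
  calc e ^ 2 * s ≤ Rr e s ^ 2 * Rr e s := by gcongr
    _ = _ := by ring

lemma We_tend {s : ℝ} (hs : 0 < s) :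
    Tendsto (fun n => en n ^ 2 / Rr (en n) s ^ 3) atTop (𝓝 0) := by
  have h := Rr_tend s
  have : Tendsto (fun n => en n ^ 2 / Rr (en n) s ^ 3) atTop (𝓝 (0 ^ 2 / |s| ^ 3)) :=
    (en_tend.pow 2).div (h.pow 3) (by positivity)
  simpa using this

lemma sqr_vol {a b h : ℝ} (hh : 0 ≤ h) : (volume (sqr a b h)).toReal = h ^ 2 := by
  unfold sqr
  rw [Measure.volume_eq_prod, Measure.prod_prod, Real.volume_Ioc, Real.volume_Ioc]
  simp [hh, sq]

lemma sg_pos {s : ℝ} (hs : 0 < s) : sg s = 1 := by unfold sg; rw [abs_of_pos hs, div_self hs.ne']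

section smp
variable {α₁ α₂ : ℝ} {h1 : 0 < α₁} {h2 : 0 < α₂} {S : ℝ × ℝ → ℝ}

lemma log_int (hS : MemLp S 2 muO) {w : HS α₁ α₂ h1 h2 S} {l : ℝ} (hl : 0 ≤ l)
    (hw : ∀ v, fA w v = l * fB w v) (h0 : ∀ p, 0 ≤ w.1.1 p)
    (hz : ∀ p, w.1.1 p = 0 → w.1.2.1 p = 0 ∧ w.1.2.2 p = 0)
    {d : ℝ} (hd : 0 < d) (hd2 : d < 1 / 2) :
    IntegrableOn (fun p => (w.1.2.1 p ^ 2 + w.1.2.2 p ^ 2) / w.1.1 p ^ 2)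
      (sqr d d (1 - 2 * d)) volume := by
  obtain ⟨χ, hχ, c0, c1, cQ⟩ := bump_exists hd hd2
  obtain ⟨K, hK⟩ := caccioppoli hS hl hw h0 hχ c0 c1
  set u := w.1.1
  set X := w.1.2.1
  set Y := w.1.2.2
  have hlim : ∀ p, Tendsto (fun n => χ p * χ p * Ge (en n) (u p) * (X p ^ 2 + Y p ^ 2)) atTop
      (𝓝 (χ p * χ p * (1 / (2 * u p ^ 2)) * (X p ^ 2 + Y p ^ 2))) := by
    intro p
    rcases (h0 p).eq_or_lt with h | h
    · obtain ⟨a, b⟩ := hz p h.symm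
      simp [a, b]
    · exact ((Ge_tend h).const_mul _).mul_const _
  have mlim : AEStronglyMeasurable (fun p => χ p * χ p * (1 / (2 * u p ^ 2)) * (X p ^ 2 + Y p ^ 2)) muO :=
    aestronglyMeasurable_of_tendsto_ae atTop (fun n => (hK _ (en_pos n)).1.1) (ae_of_all _ hlim)
  have hfin : Integrable (fun p => χ p * χ p * (1 / (2 * u p ^ 2)) * (X p ^ 2 + Y p ^ 2)) muO := by
    rw [← memLp_one_iff_integrable]
    refine ⟨mlim, lt_of_le_of_lt (Lp.eLpNorm_lim_le_liminf_eLpNorm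
      (fun n => (hK _ (en_pos n)).1.1) _ (ae_of_all _ hlim)) ?_⟩
    refine lt_of_le_of_lt ?_ (ENNReal.ofReal_lt_top (r := K))
    refine liminf_le_of_le (by isBoundedDefault) fun b hb => ?_
    obtain ⟨n, hn⟩ := hb.exists
    refine hn.trans ?_
    rw [eLpNorm_one_eq_lintegral_enorm, ← ofReal_integral_norm_eq_lintegral_enorm (hK _ (en_pos n)).1]
    refine ENNReal.ofReal_le_ofReal (le_trans (le_of_eq ?_) (hK _ (en_pos n)).2)
    congr 1; ext p
    rw [Real.norm_eq_abs, abs_of_nonneg]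
    exact mul_nonneg (mul_nonneg (mul_nonneg (c0 p) (c0 p)) (Ge_nonneg (en_pos n) (h0 p)))
      (by positivity)
  have h3 := (hfin.mono_measure (sqr_le hd.le hd.le (by linarith) (by linarith) :
    volume.restrict (sqr d d (1 - 2 * d)) ≤ muO)).const_mul 2
  refine h3.congr ?_
  filter_upwards [ae_restrict_mem (sqr_meas _ _ _)] with p hp
  rw [cQ p hp]
  rcases eq_or_ne (u p) 0 with h | h
  · simp [h]
  · field_simp

lemma sq_alt (h1' : α₁ < 1 / 2) (h2' : α₂ < 1 / 2)
    (hS : MemLp S 2 muO) {w : HS α₁ α₂ h1 h2 S} {l : ℝ} (hl : 0 ≤ l)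
    (hw : ∀ v, fA w v = l * fB w v) (h0 : ∀ p, 0 ≤ w.1.1 p)
    (hz : ∀ p, w.1.1 p = 0 → w.1.2.1 p = 0 ∧ w.1.2.2 p = 0)
    {d : ℝ} (hd : 0 < d) (hd2 : d < 1 / 2) :
    (∀ᵐ p ∂volume.restrict (sqr d d (1 - 2 * d)), w.1.1 p = 0) ∨
    (∀ᵐ p ∂volume.restrict (sqr d d (1 - 2 * d)), 0 < w.1.1 p) := by
  have hI := log_int hS hl hw h0 hz hd hd2
  have hle := (sqr_le hd.le hd.le (by linarith) (by linarith) :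
    volume.restrict (sqr d d (1 - 2 * d)) ≤ muO)
  set h := 1 - 2 * d with hh
  have hpos : 0 < h := by linarith
  set Q := sqr d d h with hQ
  have : IsFiniteMeasure (volume.restrict Q) := isFiniteMeasure_of_le muO hle
  set u := w.1.1 with hu
  set X := w.1.2.1 with hX
  set Y := w.1.2.2 with hY
  have mu : AEStronglyMeasurable u (volume.restrict Q) := w.m0.1.mono_measure hle
  have mX : AEStronglyMeasurable X (volume.restrict Q) := w.mx.1.mono_measure hle
  have mY : AEStronglyMeasurable Y (volume.restrict Q) := w.my.1.mono_measure hle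
  have hcl : ∀ n, Cl α₁ α₂ (fun p => We (en n) (u p))
      (fun p => en n ^ 2 / Rr (en n) (u p) ^ 3 * X p)
      (fun p => en n ^ 2 / Rr (en n) (u p) ^ 3 * Y p) := fun n =>
    Cl.chain0 h1 h2 w.cl (We_deriv (en_pos n)) (We_abs' (en_pos n))
      (continuous_const.div ((Rr_cont _).pow 3) fun s => (pow_pos (Rr_pos (en_pos n) s) 3).ne')
      (contDiff_id.div (Rr_contDiff (en_pos n)) fun s => (Rr_pos (en_pos n) s).ne')
      (by simp [We])
  have hP := fun n => poincare_Cl ⟨h1, h1'⟩ ⟨h2, h2'⟩ (hcl n) hpos hd.le hd.le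
    (by linarith) (by linarith)
  have mW : ∀ n, AEStronglyMeasurable (fun p => We (en n) (u p)) (volume.restrict Q) := fun n =>
    (hcl n).1.1.mono_measure hle
  have bW : ∀ n p, |We (en n) (u p)| ≤ 1 := fun n p => div_Rr_abs (en_pos n) _
  have tW : ∀ p, Tendsto (fun n => We (en n) (u p)) atTop (𝓝 (sg (u p))) := fun p => div_Rr_tend _
  have T1 : Tendsto (fun n => ∫ p in Q, We (en n) (u p) ^ 2) atTop (𝓝 (∫ p in Q, sg (u p) ^ 2)) := by
    refine tendsto_integral_of_dominated_convergence (fun _ => (1:ℝ)) (fun n => (mW n).pow 2)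
      (integrable_const _) (fun n => ae_of_all _ fun p => ?_) (ae_of_all _ fun p => (tW p).pow 2)
    rw [Real.norm_eq_abs, abs_of_nonneg (sq_nonneg _)]
    exact (sq_le_one_iff_abs_le_one _).2 (bW n p)
  have T2 : Tendsto (fun n => ∫ p in Q, We (en n) (u p)) atTop (𝓝 (∫ p in Q, sg (u p))) :=
    tendsto_integral_of_dominated_convergence (fun _ => (1:ℝ)) mW
      (integrable_const _) (fun n => ae_of_all _ fun p => bW n p) (ae_of_all _ tW)
  have T3 : ∀ Z : ℝ × ℝ → ℝ, AEStronglyMeasurable Z (volume.restrict Q) →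
      (∀ p, Z p ^ 2 ≤ X p ^ 2 + Y p ^ 2) → (∀ n, AEStronglyMeasurable
        (fun p => en n ^ 2 / Rr (en n) (u p) ^ 3 * Z p) (volume.restrict Q)) →
      Tendsto (fun n => ∫ p in Q, (en n ^ 2 / Rr (en n) (u p) ^ 3 * Z p) ^ 2) atTop (𝓝 0) := by
    intro Z mZ hZ mm
    have z0 : (0:ℝ) = ∫ p in Q, (0:ℝ) := by simp
    rw [z0]
    have hzz : ∀ p, u p = 0 → Z p = 0 := by
      intro p hp
      obtain ⟨a, b⟩ := hz p hp
      have := hZ p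
      rw [a, b] at this
      have : Z p ^ 2 ≤ 0 := by simpa using this
      exact pow_eq_zero_iff (two_ne_zero) |>.1 (le_antisymm this (sq_nonneg _))
    refine tendsto_integral_of_dominated_convergence _ (fun n => (mm n).pow 2)
      hI (fun n => ae_of_all _ fun p => ?_) (ae_of_all _ fun p => ?_)
    · rw [Real.norm_eq_abs, abs_of_nonneg (sq_nonneg _)]
      rcases (h0 p).eq_or_lt with h | h
      · rw [hzz p h.symm, mul_zero, zero_pow two_ne_zero]
        exact div_nonneg (by positivity) (by positivity)
      · have := We_small (en_pos n) h
        have hR := Rr_pos (en_pos n) (u p)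
        have : (en n ^ 2 / Rr (en n) (u p) ^ 3) ^ 2 ≤ (1 / u p) ^ 2 := by gcongr
        rw [mul_pow]
        calc _ ≤ (1 / u p) ^ 2 * (X p ^ 2 + Y p ^ 2) := by gcongr; exact hZ p
          _ = _ := by ring
    · rcases (h0 p).eq_or_lt with h | h
      · simp [hzz p h.symm]
      · have := ((We_tend h).mul_const (Z p)).pow 2
        simpa using this
  have T3X := T3 X mX (fun p => by nlinarith [sq_nonneg (Y p)]) (fun n => (hcl n).2.1.1.mono_measure hle)
  have T3Y := T3 Y mY (fun p => by nlinarith [sq_nonneg (X p)]) (fun n => (hcl n).2.2.1.1.mono_measure hle)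
  have key := le_of_tendsto_of_tendsto' T1
    (((T3X.add T3Y).const_mul (h * kap α₁ α₂)).add ((T2.pow 2).div_const (h ^ 2))) hP
  have sgu : ∀ p, sg (u p) = 0 ∧ u p = 0 ∨ sg (u p) = 1 ∧ 0 < u p := by
    intro p
    rcases (h0 p).eq_or_lt with h | h
    · left; rw [← h, sg_zero]; simp
    · right; exact ⟨sg_pos h, h⟩
  have e1 : ∀ p, sg (u p) ^ 2 = sg (u p) := by
    intro p
    rcases sgu p with ⟨a, -⟩ | ⟨a, -⟩ <;> simp [a]
  simp only [e1, add_zero, mul_zero, zero_add] at key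
  have msg : AEStronglyMeasurable (fun p => sg (u p)) (volume.restrict Q) :=
    (sg_meas.comp_aemeasurable mu.aemeasurable).aestronglyMeasurable
  have isg : Integrable (fun p => sg (u p)) (volume.restrict Q) :=
    Integrable.of_bound msg 1 (ae_of_all _ fun _ => sg_abs _)
  have hs0 : ∀ p, 0 ≤ sg (u p) := fun p => by rw [← e1]; positivity
  set m := ∫ p in Q, sg (u p) with hm
  have hm0 : 0 ≤ m := integral_nonneg hs0
  rcases hm0.eq_or_lt with hmz | hmp
  · left
    have := (integral_eq_zero_iff_of_nonneg hs0 isg).1 hmz.symm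
    filter_upwards [this] with p hp
    rcases sgu p with ⟨-, b⟩ | ⟨a, -⟩
    · exact b
    · rw [Pi.zero_apply, a] at hp; norm_num at hp
  · right
    have hmh : h ^ 2 ≤ m := by
      rw [le_div_iff₀ (by positivity)] at key
      nlinarith
    have hsub : ∫ p in Q, (1 - sg (u p)) = h ^ 2 - m := by
      rw [integral_sub (integrable_const _) isg, integral_const]
      simp only [smul_eq_mul, mul_one, Measure.real, Measure.restrict_apply_univ]
      rw [sqr_vol hpos.le]
    have h10 : ∀ p, 0 ≤ 1 - sg (u p) := fun p => by linarith [(abs_le.1 (sg_abs (u p))).2]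
    have hz' : ∫ p in Q, (1 - sg (u p)) = 0 :=
      le_antisymm (by rw [hsub]; linarith) (integral_nonneg h10)
    have := (integral_eq_zero_iff_of_nonneg h10 ((integrable_const _).sub isg)).1 hz'
    filter_upwards [this] with p hp
    rcases sgu p with ⟨a, -⟩ | ⟨-, b⟩
    · simp [a] at hp
    · exact b

lemma sqr_exhaust {P : ℝ × ℝ → Prop}
    (h : ∀ n : ℕ, ∀ᵐ p ∂volume.restrict (sqr (1/((n:ℝ)+3)) (1/((n:ℝ)+3)) (1 - 2 * (1/((n:ℝ)+3)))), P p) :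
    ∀ᵐ p ∂muO, P p := by
  have h' := (ae_restrict_iUnion_iff _ _).2 h
  refine ae_mono (Measure.restrict_mono_set _ ?_) h'
  rintro ⟨x, y⟩ ⟨⟨a, b⟩, c, d⟩
  simp only at a b c d
  obtain ⟨n, hn⟩ := exists_nat_gt (1 / min (min x (1 - x)) (min y (1 - y)))
  have hm : 0 < min (min x (1 - x)) (min y (1 - y)) := by
    simp only [lt_min_iff]; refine ⟨⟨a, ?_⟩, c, ?_⟩ <;> linarith
  have h3 : 1 / ((n:ℝ) + 3) < min (min x (1 - x)) (min y (1 - y)) := by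
    rw [div_lt_iff₀ (by positivity)]
    rw [div_lt_iff₀ hm] at hn
    nlinarith
  simp only [lt_min_iff] at h3
  refine mem_iUnion.2 ⟨n, ⟨?_, ?_⟩, ?_, ?_⟩ <;> simp only <;> linarith [h3.1.1, h3.1.2, h3.2.1, h3.2.2]

lemma smp_nonneg (h1' : α₁ < 1 / 2) (h2' : α₂ < 1 / 2)
    (hS : MemLp S 2 muO) {w : HS α₁ α₂ h1 h2 S} {l : ℝ} (hl : 0 ≤ l)
    (hw : ∀ v, fA w v = l * fB w v) (h0 : ∀ p, 0 ≤ w.1.1 p)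
    (hz : ∀ p, w.1.1 p = 0 → w.1.2.1 p = 0 ∧ w.1.2.2 p = 0) :
    (∀ᵐ p ∂muO, w.1.1 p = 0) ∨ (∀ᵐ p ∂muO, 0 < w.1.1 p) := by
  have hdn : ∀ n : ℕ, 0 < 1/((n:ℝ)+3) ∧ 1/((n:ℝ)+3) ≤ 1 / 3 := fun n => ⟨by positivity, by
    gcongr; linarith [(Nat.cast_nonneg n : (0:ℝ) ≤ n)]⟩
  have alt := fun n : ℕ => sq_alt h1' h2' hS hl hw h0 hz (hdn n).1 (by linarith [(hdn n).2])
  have hsub : ∀ n : ℕ, volume.restrict (sqr (1/3) (1/3) (1/3)) ≤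
      volume.restrict (sqr (1/((n:ℝ)+3)) (1/((n:ℝ)+3)) (1 - 2 * (1/((n:ℝ)+3)))) := by
    intro n
    refine Measure.restrict_mono_set _ ?_
    have := hdn n
    refine prod_mono (Ioc_subset_Ioc ?_ ?_) (Ioc_subset_Ioc ?_ ?_) <;> linarith
  have hne : (volume.restrict (sqr (1/3) (1/3) (1/3))) ≠ 0 := by
    intro h
    have h2 : volume (sqr (1/3) (1/3) (1/3)) = 0 := by
      rw [← Measure.restrict_apply_univ, h]; simp
    have := sqr_vol (a := 1/3) (b := 1/3) (h := 1/3) (by norm_num)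
    rw [h2] at this
    norm_num at this
  have : NeZero (volume.restrict (sqr (1/3) (1/3) (1/3))) := ⟨hne⟩
  by_cases hc : ∀ᵐ p ∂volume.restrict (sqr (1/3) (1/3) (1/3)), w.1.1 p = 0
  · left
    refine sqr_exhaust fun n => (alt n).resolve_right fun h => ?_
    have h3 := ae_mono (hsub n) h
    obtain ⟨p, a, b⟩ := (hc.and h3).exists
    exact b.ne' a
  · right
    exact sqr_exhaust fun n => (alt n).resolve_left fun h => hc (ae_mono (hsub n) h)

end smp

section concl
variable {α₁ α₂ : ℝ} {h1 : 0 < α₁} {h2 : 0 < α₂} {S : ℝ × ℝ → ℝ}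

/-- Abstract first eigenfunctions. -/
def Eig (w : HS α₁ α₂ h1 h2 S) : Prop := ∀ v, fA w v = sInf (raySet α₁ α₂ h1 h2 S) * fB w v

lemma Eig.add {w w' : HS α₁ α₂ h1 h2 S} (h : Eig w) (h' : Eig w') : Eig (w + w') := fun v => by
  rw [fA_add, fB_add, h v, h' v]; ring

lemma Eig.smul {w : HS α₁ α₂ h1 h2 S} (h : Eig w) (c : ℝ) : Eig (c • w) := fun v => by
  rw [fA_smul, fB_smul, h v]; ring

lemma Eig.abs {w : HS α₁ α₂ h1 h2 S} (h : Eig w) : Eig (habs w) :=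
  euler_lagrange ((habs_fA w).trans (by rw [habs_fB, h w]))

lemma Eig.alt (h1' : α₁ < 1 / 2) (h2' : α₂ < 1 / 2) (hS : MemLp S 2 muO)
    {w : HS α₁ α₂ h1 h2 S} (h : Eig w) :
    (∀ᵐ p ∂muO, w.1.1 p = 0) ∨ (∀ᵐ p ∂muO, w.1.1 p ≠ 0) := by
  have := smp_nonneg h1' h2' hS ray_nonneg h.abs (fun p => abs_nonneg _) (fun p hp => by
    have : w.1.1 p = 0 := abs_eq_zero.1 hp
    constructor
    · change sg (w.1.1 p) * _ = 0
      rw [this, sg_zero, zero_mul]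
    · change sg (w.1.1 p) * _ = 0
      rw [this, sg_zero, zero_mul])
  refine this.imp (fun h => ?_) (fun h => ?_)
  · filter_upwards [h] with p hp using abs_eq_zero.1 hp
  · filter_upwards [h] with p hp using abs_pos.1 hp

lemma Eig.sign (h1' : α₁ < 1 / 2) (h2' : α₂ < 1 / 2) (hS : MemLp S 2 muO)
    {w : HS α₁ α₂ h1 h2 S} (h : Eig w) (hne : ¬ ∀ᵐ p ∂muO, w.1.1 p = 0) :
    (∀ᵐ p ∂muO, 0 < w.1.1 p) ∨ (∀ᵐ p ∂muO, w.1.1 p < 0) := by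
  have hw := (h.alt h1' h2' hS).resolve_left hne
  have e : ∀ p, (w + habs w).1.1 p = w.1.1 p + |w.1.1 p| := fun p => rfl
  rcases (h.add h.abs).alt h1' h2' hS with hp | hp
  · right
    filter_upwards [hp, hw] with p a b
    rw [e] at a
    refine lt_of_le_of_ne ?_ b
    linarith [abs_nonneg (w.1.1 p)]
  · left
    filter_upwards [hp, hw] with p a b
    rw [e] at a
    by_contra hc
    exact a (by rw [abs_of_nonpos (not_lt.1 hc)]; ring)

lemma muO_ne : muO ≠ 0 := by
  intro h
  have := sqr_vol (a := 0) (b := 0) (h := 1) zero_le_one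
  have h2 : muO univ = 0 := by rw [h]; simp
  rw [muO_eq, Measure.restrict_apply_univ] at h2
  unfold sqr at this
  rw [zero_add, h2] at this
  norm_num at this

instance : NeZero muO := ⟨muO_ne⟩

lemma fB_ne {w v : HS α₁ α₂ h1 h2 S} (hw : ∀ᵐ p ∂muO, 0 < w.1.1 p)
    (hv : ∀ᵐ p ∂muO, 0 < v.1.1 p) : fB w v ≠ 0 := by
  intro h
  have := (integral_eq_zero_iff_of_nonneg_ae (by
    filter_upwards [hw, hv] with p a b using (mul_pos a b).le) (L2_mul w.m0 v.m0)).1 h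
  obtain ⟨p, a, b, c⟩ := (this.and (hw.and hv)).exists
  exact (mul_pos b c).ne' a

lemma Eig.simple (h1' : α₁ < 1 / 2) (h2' : α₂ < 1 / 2) (hS : MemLp S 2 muO)
    {u₁ u : HS α₁ α₂ h1 h2 S} (hu₁ : Eig u₁) (hpos : ∀ᵐ p ∂muO, 0 < u₁.1.1 p) (hu : Eig u) :
    ∃ c : ℝ, ∀ᵐ p ∂muO, u.1.1 p = c * u₁.1.1 p := by
  have hn := fB_ne hpos hpos
  set c := fB u u₁ / fB u₁ u₁ with hc
  have hw : Eig (u + (-c) • u₁) := hu.add (hu₁.smul _)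
  have hB : fB (u + (-c) • u₁) u₁ = 0 := by
    rw [fB_add, fB_smul, hc]; field_simp; ring
  have hz : ∀ᵐ p ∂muO, (u + (-c) • u₁).1.1 p = 0 := by
    by_contra hne
    rcases hw.sign h1' h2' hS hne with h | h
    · exact fB_ne h hpos hB
    · refine fB_ne (w := (-1 : ℝ) • (u + (-c) • u₁)) ?_ hpos (by rw [fB_smul, hB, mul_zero])
      filter_upwards [h] with p hp
      have : ((-1 : ℝ) • (u + (-c) • u₁)).1.1 p = -(u + (-c) • u₁).1.1 p := by
        change (-1 : ℝ) * _ = _; ring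
      rw [this]; linarith
  refine ⟨c, ?_⟩
  filter_upwards [hz] with p hp
  have : (u + (-c) • u₁).1.1 p = u.1.1 p + (-c) * u₁.1.1 p := rfl
  rw [this] at hp
  linarith

lemma ray_nonempty (hS : MemLp S 2 muO) : (raySet α₁ α₂ h1 h2 S).Nonempty := by
  obtain ⟨χ, hχ, c0, c1, cQ⟩ := bump_exists (d := 1/4) (by norm_num) (by norm_num)
  have mS : MemLp (fun p => S p * χ p) 2 muO := by
    have := memLp_bdd (C := 1) hχ.1.continuous.aestronglyMeasurable
      (ae_of_all muO fun p => by rw [abs_of_nonneg (c0 p)]; exact c1 p) hS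
    simpa only [mul_comm] using this
  let w : HS α₁ α₂ h1 h2 S := ⟨(χ, _, _), Cl_test h1 h2 hχ, mS⟩
  have hpos : 0 < fB w w := by
    refine (fB_nonneg w).lt_of_ne fun h => ?_
    rw [fB_self] at h
    have h2 := (integral_eq_zero_iff_of_nonneg (fun p => sq_nonneg _) w.m0.integrable_sq).1 h.symm
    have h3 := ae_mono (sqr_le (a := 1/4) (b := 1/4) (h := 1 - 2 * (1/4)) (by norm_num)
      (by norm_num) (by norm_num) (by norm_num)) h2
    have h4 : ∀ᵐ p ∂volume.restrict (sqr (1/4) (1/4) (1 - 2 * (1/4))), False := by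
      filter_upwards [h3, ae_restrict_mem (sqr_meas _ _ _)] with p a b
      have : χ p ^ 2 = 0 := a
      rw [cQ p b] at this
      norm_num at this
    rw [eventually_false_iff_eq_bot, ae_eq_bot, Measure.restrict_eq_zero] at h4
    have := sqr_vol (a := 1/4) (b := 1/4) (h := 1 - 2 * (1/4)) (by norm_num)
    rw [h4] at this
    norm_num at this
  refine ⟨_, (√(fB w w))⁻¹ • w, ?_, rfl⟩
  have sB : ∀ c : ℝ, fB (c • w) (c • w) = c ^ 2 * fB w w := fun c => by
    rw [fB_smul, fB_comm, fB_smul]; ring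
  rw [sB, inv_pow, Real.sq_sqrt hpos.le, inv_mul_cancel₀ hpos.ne']

lemma first_exists (h1' : α₁ < 1 / 2) (h2' : α₂ < 1 / 2) (hS : MemLp S 2 muO) :
    ∃ w : HS α₁ α₂ h1 h2 S, Eig w ∧ ∀ᵐ p ∂muO, 0 < w.1.1 p := by
  obtain ⟨w, hB, hA⟩ := minimizer_exists (h1 := h1) (h2 := h2) h1' h2' (ray_nonempty hS)
  have hw : Eig w := euler_lagrange (by rw [hB, mul_one]; exact hA)
  refine ⟨habs w, hw.abs, ?_⟩
  have : ¬ ∀ᵐ p ∂muO, w.1.1 p = 0 := by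
    intro h
    have : fB w w = 0 := by
      rw [fB_self]
      refine (integral_congr_ae ?_).trans (integral_zero _ _)
      filter_upwards [h] with p hp
      rw [hp]; norm_num
    rw [hB] at this
    norm_num at this
  filter_upwards [(hw.alt h1' h2' hS).resolve_left this] with p hp using abs_pos.2 hp

end concl

lemma Wy_mem {α : ℝ} (hα : α ∈ Ioo (0:ℝ) (1/2)) : MemLp (fun p : ℝ × ℝ => p.2 ^ (-α)) 2 muO := by
  refine (memLp_two_iff_integrable_sq (measurable_snd.pow_const _).aestronglyMeasurable).2 ?_
  rw [muO_eq, Measure.volume_eq_prod, ← Measure.prod_restrict]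
  exact Integrable.comp_snd (wint hα).1 _

lemma Wx_mem {α : ℝ} (hα : α ∈ Ioo (0:ℝ) (1/2)) : MemLp (fun p : ℝ × ℝ => p.1 ^ (-α)) 2 muO := by
  refine (memLp_two_iff_integrable_sq (measurable_fst.pow_const _).aestronglyMeasurable).2 ?_
  rw [muO_eq, Measure.volume_eq_prod, ← Measure.prod_restrict]
  exact Integrable.comp_fst (wint hα).1 _

lemma wcancel {α t x : ℝ} (ht : 0 < t) : t ^ α * (x * t ^ (-α)) = x := by
  rw [mul_left_comm, ← Real.rpow_add ht]; simp

lemma test_zero_off {φ : ℝ × ℝ → ℝ} (h : IsTest φ) {p : ℝ × ℝ} (hp : p ∉ Omega) : φ p = 0 :=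
  image_eq_zero_of_notMem_tsupport fun hh => hp (h.2.2 hh)

lemma test_ibp {φ ψ : ℝ × ℝ → ℝ} (h : IsTest φ) (g : IsTest ψ) (e : ℝ × ℝ) :
    ∫ p, φ p * fderiv ℝ ψ p e ∂muO = - ∫ p, fderiv ℝ φ p e * ψ p ∂muO := by
  have cφ := h.1.continuous
  have cψ := g.1.continuous
  have dφ : Continuous fun p => fderiv ℝ φ p e :=
    (h.c1.continuous_fderiv one_ne_zero).clm_apply continuous_const
  have dψ : Continuous fun p => fderiv ℝ ψ p e :=
    (g.c1.continuous_fderiv one_ne_zero).clm_apply continuous_const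
  have := integral_mul_fderiv_eq_neg_fderiv_mul_of_integrable (μ := volume) (f := φ) (g := ψ) (v := e)
    ((dφ.mul cψ).integrable_of_hasCompactSupport g.2.1.mul_left)
    ((cφ.mul dψ).integrable_of_hasCompactSupport h.2.1.mul_right)
    ((cφ.mul cψ).integrable_of_hasCompactSupport h.2.1.mul_right)
    (fun p _ => (h.c1.differentiable one_ne_zero) p)
    (fun p _ => (g.c1.differentiable one_ne_zero) p)
  have e1 := setIntegral_eq_integral_of_forall_compl_eq_zero (μ := volume) (s := Omega)
    (f := fun p => φ p * fderiv ℝ ψ p e) (fun p hp => by simp only [test_zero_off h hp, zero_mul])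
  have e2 := setIntegral_eq_integral_of_forall_compl_eq_zero (μ := volume) (s := Omega)
    (f := fun p => fderiv ℝ φ p e * ψ p) (fun p hp => by simp only [test_zero_off g hp, mul_zero])
  exact e1.trans (this.trans (congrArg Neg.neg e2.symm))

lemma weak_lim {e : ℝ × ℝ} {ω W u X : ℝ × ℝ → ℝ} {φ : ℕ → ℝ × ℝ → ℝ} (hW : MemLp W 2 muO)
    (hWω : ∀ p ∈ Omega, ω p * W p = 1) (mu : MemLp u 2 muO) (mX : MemLp X 2 muO)
    (hφ : ∀ n, IsTest (φ n)) (m : ∀ n, MemLp (fun p => ω p * fderiv ℝ (φ n) p e) 2 muO)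
    (tu : Tendsto (fun n => ∫ p, (φ n p - u p) ^ 2 ∂muO) atTop (𝓝 0))
    (tX : Tendsto (fun n => ∫ p, (ω p * fderiv ℝ (φ n) p e - X p) ^ 2 ∂muO) atTop (𝓝 0))
    {ψ : ℝ × ℝ → ℝ} (g : IsTest ψ) :
    ∫ p, u p * fderiv ℝ ψ p e ∂muO = - ∫ p, (X p * W p) * ψ p ∂muO := by
  have dψ : Continuous fun p => fderiv ℝ ψ p e :=
    (g.c1.continuous_fderiv one_ne_zero).clm_apply continuous_const
  have m1 : MemLp (fun p => fderiv ℝ ψ p e) 2 muO := cs_memLp dψ (g.2.1.fderiv_apply ℝ e)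
  obtain ⟨C, hC, -, -⟩ := test_bdd g
  have m2 : MemLp (fun p => ψ p * W p) 2 muO :=
    memLp_bdd g.1.continuous.aestronglyMeasurable (ae_of_all _ hC) hW
  have t1 := L2_tendsto_mul mu m1 (fun n => (hφ n).m0) (fun _ => m1) tu (by simp)
  have t2 := L2_tendsto_mul mX m2 m (fun _ => m2) tX (by simp)
  have e2 : ∫ p, (X p * W p) * ψ p ∂muO = ∫ p, X p * (ψ p * W p) ∂muO := by
    congr 1; ext p; ring
  rw [e2]
  refine tendsto_nhds_unique t1 (t2.neg.congr fun n => ?_)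
  rw [test_ibp (hφ n) g e]
  congr 1
  refine integral_congr_ae ?_
  filter_upwards [muO_mem] with p hp
  have := hWω p hp
  calc _ = fderiv ℝ (φ n) p e * ψ p * (ω p * W p) := by ring
    _ = _ := by rw [this, mul_one]

lemma int_loc {f : ℝ × ℝ → ℝ} (h : Integrable f muO) : LocallyIntegrableOn f Omega volume :=
  IntegrableOn.locallyIntegrableOn h

lemma sum3_lt {a b c ε : ℝ} (hε : 0 < ε) (h : √(a + b + c) < √ε) : a + b + c < ε := by
  exact (Real.sqrt_lt_sqrt_iff_of_pos hε).1 h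

lemma toCl {α₁ α₂ : ℝ} {u gx gy : ℝ × ℝ → ℝ} (h : MemH10 α₁ α₂ u gx gy) :
    Cl α₁ α₂ u (fun p => p.2 ^ α₁ * gx p) (fun p => p.1 ^ α₂ * gy p) := by
  refine ⟨h.1.memL2, h.1.wgx, h.1.wgy, fun ε hε => ?_⟩
  obtain ⟨φ, hφ, hn⟩ := h.2 (√ε) (Real.sqrt_pos.2 hε)
  have hs := sum3_lt hε hn
  have a := N2_nonneg (μ := muO) (fun p => u p - φ p)
  have b := N2_nonneg (μ := muO) (fun p => p.2 ^ α₁ * (gx p - pdx φ p))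
  have c := N2_nonneg (μ := muO) (fun p => p.1 ^ α₂ * (gy p - pdy φ p))
  have ea : ∫ p, (φ p - u p) ^ 2 ∂muO = ∫ p, (u p - φ p) ^ 2 ∂muO := by
    congr 1; ext p; ring
  have eb : ∫ p, (p.2 ^ α₁ * pdx φ p - p.2 ^ α₁ * gx p) ^ 2 ∂muO =
      ∫ p, (p.2 ^ α₁ * (gx p - pdx φ p)) ^ 2 ∂muO := by
    congr 1; ext p; ring
  have ec : ∫ p, (p.1 ^ α₂ * pdy φ p - p.1 ^ α₂ * gy p) ^ 2 ∂muO =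
      ∫ p, (p.1 ^ α₂ * (gy p - pdy φ p)) ^ 2 ∂muO := by
    congr 1; ext p; ring
  refine ⟨φ, hφ, ?_, ?_, ?_⟩
  · rw [ea]; linarith
  · rw [eb]; linarith
  · rw [ec]; linarith

lemma ofCl {α₁ α₂ : ℝ} (h1 : α₁ ∈ Ioo (0:ℝ) (1/2)) (h2 : α₂ ∈ Ioo (0:ℝ) (1/2))
    {u X Y : ℝ × ℝ → ℝ} (h : Cl α₁ α₂ u X Y) :
    MemH10 α₁ α₂ u (fun p => X p * p.2 ^ (-α₁)) (fun p => Y p * p.1 ^ (-α₂)) := by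
  obtain ⟨φ, hφ, tu, tX, tY⟩ := h.seq
  obtain ⟨mu, mX, mY, hap⟩ := h
  have cx : ∀ᵐ p ∂muO, p.2 ^ α₁ * (X p * p.2 ^ (-α₁)) = X p := by
    filter_upwards [muO_mem] with p hp using wcancel hp.2.1
  have cy : ∀ᵐ p ∂muO, p.1 ^ α₂ * (Y p * p.1 ^ (-α₂)) = Y p := by
    filter_upwards [muO_mem] with p hp using wcancel hp.1.1
  have lu : LocallyIntegrableOn u Omega volume := int_loc (mu.integrable (by norm_num))
  refine ⟨⟨mu, ⟨lu, int_loc (L2_mul mX (Wy_mem h1)), fun ψ hψ => ?_⟩,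
    ⟨lu, int_loc (L2_mul mY (Wx_mem h2)), fun ψ hψ => ?_⟩,
    (memLp_congr_ae cx).2 mX, (memLp_congr_ae cy).2 mY⟩, fun ε hε => ?_⟩
  · exact weak_lim (ω := fun p => p.2 ^ α₁) (Wy_mem h1)
      (fun p hp => by have := wcancel (α := α₁) (x := 1) hp.2.1; rwa [one_mul] at this)
      mu mX hφ (fun n => (hφ n).mx h1.1) tu tX hψ
  · exact weak_lim (ω := fun p => p.1 ^ α₂) (Wx_mem h2)
      (fun p hp => by have := wcancel (α := α₂) (x := 1) hp.1.1; rwa [one_mul] at this)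
      mu mY hφ (fun n => (hφ n).my h2.1) tu tY hψ
  · obtain ⟨φ, hφ, a, b, c⟩ := hap (ε ^ 2 / 3) (by positivity)
    refine ⟨φ, hφ, ?_⟩
    unfold H1Norm
    rw [Real.sqrt_lt' hε]
    have ea : ∫ p, (φ p - u p) ^ 2 ∂muO = ∫ p, (u p - φ p) ^ 2 ∂muO := by
      congr 1; ext p; ring
    have eb : ∫ p, (p.2 ^ α₁ * pdx φ p - X p) ^ 2 ∂muO =
        ∫ p, (p.2 ^ α₁ * (X p * p.2 ^ (-α₁) - pdx φ p)) ^ 2 ∂muO := by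
      refine integral_congr_ae ?_
      filter_upwards [cx] with p hp
      rw [mul_sub, hp]; ring
    have ec : ∫ p, (p.1 ^ α₂ * pdy φ p - Y p) ^ 2 ∂muO =
        ∫ p, (p.1 ^ α₂ * (Y p * p.1 ^ (-α₂) - pdy φ p)) ^ 2 ∂muO := by
      refine integral_congr_ae ?_
      filter_upwards [cy] with p hp
      rw [mul_sub, hp]; ring
    rw [ea] at a; rw [eb] at b; rw [ec] at c
    linarith

section trans
variable {α₁ α₂ : ℝ} {V : ℝ × ℝ → ℝ}

/-- Square root of the potential. -/
def sV (V : ℝ × ℝ → ℝ) : ℝ × ℝ → ℝ := fun p => √(V p)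

lemma sV_meas (hm : AEStronglyMeasurable V muO) : AEStronglyMeasurable (sV V) muO :=
  Real.continuous_sqrt.comp_aestronglyMeasurable hm

lemma sV_mem (hi : Integrable V muO) (h0 : ∀ᵐ p ∂muO, 0 ≤ V p) : MemLp (sV V) 2 muO := by
  refine (memLp_two_iff_integrable_sq (sV_meas hi.1)).2 (hi.congr ?_)
  filter_upwards [h0] with p hp
  exact (Real.sq_sqrt hp).symm

lemma toHS (h1 : 0 < α₁) (h2 : 0 < α₂) (hi : Integrable V muO) (h0 : ∀ᵐ p ∂muO, 0 ≤ V p)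
    {u gx gy : ℝ × ℝ → ℝ} (h : MemH0 α₁ α₂ V u gx gy) :
    ((u, (fun p => p.2 ^ α₁ * gx p), (fun p => p.1 ^ α₂ * gy p)) : Tr) ∈
      HS α₁ α₂ h1 h2 (sV V) := by
  refine ⟨toCl h.1, ?_⟩
  refine (memLp_two_iff_integrable_sq ((sV_meas hi.1).mul h.1.1.memL2.1)).2
    (Integrable.congr h.2 ?_)
  filter_upwards [h0] with p hp
  change _ = (√(V p) * u p) ^ 2
  rw [mul_pow, Real.sq_sqrt hp]

lemma ofHS {h1 : 0 < α₁} {h2 : 0 < α₂} (h1' : α₁ < 1/2) (h2' : α₂ < 1/2)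
    (h0 : ∀ᵐ p ∂muO, 0 ≤ V p) (w : HS α₁ α₂ h1 h2 (sV V)) :
    MemH0 α₁ α₂ V w.1.1 (fun p => w.1.2.1 p * p.2 ^ (-α₁)) (fun p => w.1.2.2 p * p.1 ^ (-α₂)) := by
  refine ⟨ofCl ⟨h1, h1'⟩ ⟨h2, h2'⟩ w.cl, ?_⟩
  refine Integrable.congr w.ms.integrable_sq ?_
  filter_upwards [h0] with p hp
  change (√(V p) * w.1.1 p) ^ 2 = _
  rw [mul_pow, Real.sq_sqrt hp]

lemma aForm_eq {h1 : 0 < α₁} {h2 : 0 < α₂} (h0 : ∀ᵐ p ∂muO, 0 ≤ V p)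
    (w v : HS α₁ α₂ h1 h2 (sV V)) {gx gy hx hy : ℝ × ℝ → ℝ}
    (ex : ∀ᵐ p ∂muO, p.2 ^ α₁ * gx p = w.1.2.1 p) (ey : ∀ᵐ p ∂muO, p.1 ^ α₂ * gy p = w.1.2.2 p)
    (ex' : ∀ᵐ p ∂muO, p.2 ^ α₁ * hx p = v.1.2.1 p) (ey' : ∀ᵐ p ∂muO, p.1 ^ α₂ * hy p = v.1.2.2 p) :
    aForm α₁ α₂ V w.1.1 gx gy v.1.1 hx hy = fA w v := by
  unfold aForm fA
  rw [← integral_add3 (L2_mul w.mx v.mx) (L2_mul w.my v.my) (L2_mul w.ms v.ms)]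
  refine integral_congr_ae ?_
  filter_upwards [h0, ex, ey, ex', ey'] with p hp a b c d
  rw [a, b, c, d]
  have : sV V p * sV V p = V p := Real.mul_self_sqrt hp
  rw [← this]; ring

lemma cxw {h1 : 0 < α₁} {h2 : 0 < α₂} (w : HS α₁ α₂ h1 h2 (sV V)) :
    ∀ᵐ p ∂muO, p.2 ^ α₁ * (w.1.2.1 p * p.2 ^ (-α₁)) = w.1.2.1 p := by
  filter_upwards [muO_mem] with p hp using wcancel hp.2.1

lemma cyw {h1 : 0 < α₁} {h2 : 0 < α₂} (w : HS α₁ α₂ h1 h2 (sV V)) :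
    ∀ᵐ p ∂muO, p.1 ^ α₂ * (w.1.2.2 p * p.1 ^ (-α₂)) = w.1.2.2 p := by
  filter_upwards [muO_mem] with p hp using wcancel hp.1.1

lemma lam1_eq (h1 : 0 < α₁) (h2 : 0 < α₂) (h1' : α₁ < 1/2) (h2' : α₂ < 1/2)
    (hi : Integrable V muO) (h0 : ∀ᵐ p ∂muO, 0 ≤ V p) :
    lam1 α₁ α₂ V = sInf (raySet α₁ α₂ h1 h2 (sV V)) := by
  unfold lam1
  congr 1
  ext r
  constructor
  · rintro ⟨u, gx, gy, hu, hn, rfl⟩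
    refine ⟨⟨_, toHS h1 h2 hi h0 hu⟩, by rw [fB_self]; exact hn, ?_⟩
    exact aForm_eq h0 ⟨_, toHS h1 h2 hi h0 hu⟩ ⟨_, toHS h1 h2 hi h0 hu⟩
      (ae_of_all _ fun _ => rfl) (ae_of_all _ fun _ => rfl) (ae_of_all _ fun _ => rfl)
      (ae_of_all _ fun _ => rfl)
  · rintro ⟨w, hB, rfl⟩
    refine ⟨_, _, _, ofHS h1' h2' h0 w, by rw [← hB, fB_self], ?_⟩
    exact (aForm_eq h0 w w (cxw w) (cyw w) (cxw w) (cyw w)).symm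

lemma toEig {h1 : 0 < α₁} {h2 : 0 < α₂} (h1' : α₁ < 1/2) (h2' : α₂ < 1/2)
    (hi : Integrable V muO) (h0 : ∀ᵐ p ∂muO, 0 ≤ V p) {u gx gy : ℝ × ℝ → ℝ}
    (h : IsEigenfun α₁ α₂ V (lam1 α₁ α₂ V) u gx gy) :
    Eig (⟨_, toHS h1 h2 hi h0 h.1⟩ : HS α₁ α₂ h1 h2 (sV V)) := by
  intro v
  rw [← lam1_eq h1 h2 h1' h2' hi h0]
  have := h.2 _ _ _ (ofHS h1' h2' h0 v)
  rw [← aForm_eq h0 ⟨_, toHS h1 h2 hi h0 h.1⟩ v (gx := gx) (gy := gy)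
      (ae_of_all _ fun _ => rfl) (ae_of_all _ fun _ => rfl) (cxw v) (cyw v)]
  exact this

lemma ofEig {h1 : 0 < α₁} {h2 : 0 < α₂} (h1' : α₁ < 1/2) (h2' : α₂ < 1/2)
    (hi : Integrable V muO) (h0 : ∀ᵐ p ∂muO, 0 ≤ V p) {w : HS α₁ α₂ h1 h2 (sV V)} (h : Eig w) :
    IsEigenfun α₁ α₂ V (lam1 α₁ α₂ V) w.1.1 (fun p => w.1.2.1 p * p.2 ^ (-α₁))
      (fun p => w.1.2.2 p * p.1 ^ (-α₂)) := by
  refine ⟨ofHS h1' h2' h0 w, fun v hx hy hv => ?_⟩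
  rw [lam1_eq h1 h2 h1' h2' hi h0]
  have := h ⟨_, toHS h1 h2 hi h0 hv⟩
  rw [← aForm_eq h0 w ⟨_, toHS h1 h2 hi h0 hv⟩ (hx := hx) (hy := hy) (cxw w) (cyw w)
      (ae_of_all _ fun _ => rfl) (ae_of_all _ fun _ => rfl)] at this
  exact this

end trans

theorem ground_state_simple_positive (α₁ α₂ ppow M : ℝ)
    (hα₁ : α₁ ∈ Ioo (0:ℝ) (1/2)) (hα₂ : α₂ ∈ Ioo (0:ℝ) (1/2))
    (hp : 1 < ppow) (hM : 0 < M) (V : ℝ × ℝ → ℝ) (hV : MemSp ppow M V) :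
    ∃ u₁ g₁x g₁y : ℝ × ℝ → ℝ,
      IsEigenfun α₁ α₂ V (lam1 α₁ α₂ V) u₁ g₁x g₁y ∧
      (∀ᵐ p ∂(volume.restrict Omega), 0 < u₁ p) ∧
      (∀ u gx gy : ℝ × ℝ → ℝ, IsEigenfun α₁ α₂ V (lam1 α₁ α₂ V) u gx gy →
        ∃ c : ℝ, ∀ᵐ p ∂(volume.restrict Omega), u p = c * u₁ p) ∧
      (∀ u gx gy : ℝ × ℝ → ℝ, IsEigenfun α₁ α₂ V (lam1 α₁ α₂ V) u gx gy →
        ¬ (∀ᵐ p ∂(volume.restrict Omega), u p = 0) →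
        ((∀ᵐ p ∂(volume.restrict Omega), 0 < u p) ∨
         (∀ᵐ p ∂(volume.restrict Omega), u p < 0))) := by
  obtain ⟨h1, h1'⟩ := hα₁
  obtain ⟨h2, h2'⟩ := hα₂
  obtain ⟨hVm, h0, -⟩ := hV
  have hi : Integrable V muO := hVm.integrable (by
    rw [← ENNReal.ofReal_one]; exact ENNReal.ofReal_le_ofReal hp.le)
  have hS := sV_mem hi h0
  obtain ⟨w, hw, hpos⟩ := first_exists (h1 := h1) (h2 := h2) h1' h2' hS
  refine ⟨_, _, _, ofEig h1' h2' hi h0 hw, hpos, fun u gx gy hu => ?_, fun u gx gy hu hne => ?_⟩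
  · exact Eig.simple h1' h2' hS hw hpos (toEig (h1 := h1) (h2 := h2) h1' h2' hi h0 hu)
  · exact Eig.sign h1' h2' hS (toEig (h1 := h1) (h2 := h2) h1' h2' hi h0 hu) hne
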